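/- Let λ > 0, 0 < σ < 1 and 0 < α < 1 satisfy α + 2σ < min{λ, 1}. Then there exists a constant C = C(λ, σ, α) > 0 such that for every f ∈ C^α_+, the function u(x) := (1/Γ(2σ)) ∫₀^∞ P_t^λ f(x) t^{2σ−1} dt is well defined for every x > 0 (all the integrals involved converge absolutely), u belongs to C^{α+2σ}_+, and ‖u‖_{C^{α+2σ}_+} ≤ C ‖f‖_{C^α_+}. -/

import Mathlib

open Real MeasureTheory Set Filter

noncomputable section

/-- The modified Bessel function of the first kind `I_ν(z)`. -/
def besselI (ν z : ℝ) : ℝ :=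
  ∑' k : ℕ, (z / 2) ^ (2 * (k : ℝ) + ν) / ((Nat.factorial k : ℝ) * Real.Gamma ((k : ℝ) + ν + 1))

/-- The Bessel heat kernel `W_t^λ(x,y)`. -/
def besselHeatKernel (lam t x y : ℝ) : ℝ :=
  Real.sqrt (x * y) / (2 * t) * besselI (lam - 1 / 2) (x * y / (2 * t)) *
    Real.exp (-(x ^ 2 + y ^ 2) / (4 * t))

/-- The Bessel–Poisson kernel `P_t^λ(x,y)`, obtained by subordination. -/
def besselPoissonKernel (lam t x y : ℝ) : ℝ :=
  t / (2 * Real.sqrt Real.pi) *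
    ∫ s in Set.Ioi (0 : ℝ),
      s ^ (-(3 : ℝ) / 2) * Real.exp (-t ^ 2 / (4 * s)) * besselHeatKernel lam s x y

/-- The Bessel heat semigroup `W_t^λ u (x)`. -/
def heatSemigroup (lam : ℝ) (u : ℝ → ℝ) (t x : ℝ) : ℝ :=
  ∫ y in Set.Ioi (0 : ℝ), besselHeatKernel lam t x y * u y

/-- The Bessel–Poisson semigroup `P_t^λ f (x)`. -/
def poissonSemigroup (lam : ℝ) (f : ℝ → ℝ) (t x : ℝ) : ℝ :=
  ∫ y in Set.Ioi (0 : ℝ), besselPoissonKernel lam t x y * f y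

/-- The set of Hölder quotients of `f` on `(0,∞)`. -/
def holderRatioSet (α : ℝ) (f : ℝ → ℝ) : Set ℝ :=
  {r | ∃ x y : ℝ, 0 < x ∧ 0 < y ∧ x ≠ y ∧ r = |f x - f y| / |x - y| ^ α}

/-- The set of growth quotients `|f x|/x^α` of `f` on `(0,∞)`. -/
def growthRatioSet (α : ℝ) (f : ℝ → ℝ) : Set ℝ :=
  {r | ∃ x : ℝ, 0 < x ∧ r = |f x| / x ^ α}

/-- Membership in the Hölder space `C^α_+` (equal to `Lip_+` when `α = 1`). -/
def MemHolderPlus (α : ℝ) (f : ℝ → ℝ) : Prop :=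
  ContinuousOn f (Set.Ioi 0) ∧ BddAbove (holderRatioSet α f) ∧ BddAbove (growthRatioSet α f)

/-- The `C^α_+` norm. -/
def holderPlusNorm (α : ℝ) (f : ℝ → ℝ) : ℝ :=
  sSup (holderRatioSet α f) + sSup (growthRatioSet α f)

/-- `Γ(-σ)`, written through the functional equation `Γ(-σ) = Γ(2-σ)/((-σ)(1-σ))`. -/
def gammaNeg (σ : ℝ) : ℝ := Real.Gamma (2 - σ) / (-σ * (1 - σ))

/-- The kernel `K_σ^λ(x,y)`. -/
def fracKernelK (lam σ x y : ℝ) : ℝ :=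
  1 / (-gammaNeg σ) * ∫ t in Set.Ioi (0 : ℝ), besselHeatKernel lam t x y * t ^ (-1 - σ)

/-- `W_t^λ 1 (x)`. -/
def heatOne (lam t x : ℝ) : ℝ := ∫ y in Set.Ioi (0 : ℝ), besselHeatKernel lam t x y

/-- The function `B_σ^λ(x)`. -/
def fracFunB (lam σ x : ℝ) : ℝ :=
  1 / gammaNeg σ * ∫ t in Set.Ioi (0 : ℝ), (heatOne lam t x - 1) * t ^ (-1 - σ)

/-- The integer `m` with `m - 1 ≤ β < m`. -/
def fracOrder (β : ℝ) : ℕ := Nat.floor β + 1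

/-- The Segovia–Wheeden fractional derivative `∂_t^β F(t)`, a complex number. -/
def fracDeriv (β : ℝ) (F : ℝ → ℝ) (t : ℝ) : ℂ :=
  Complex.exp (-(Real.pi * ((fracOrder β : ℝ) - β)) * Complex.I) /
      Complex.ofReal (Real.Gamma ((fracOrder β : ℝ) - β)) *
    Complex.ofReal
      (∫ s in Set.Ioi (0 : ℝ),
        iteratedDeriv (fracOrder β) F (t + s) * s ^ ((fracOrder β : ℝ) - β - 1))

section BesselKernels

open ProbabilityTheory

theorem integral_betaMeasure {a b : ℝ} (ha : 0 < a) (hb : 0 < b) (g : ℝ → ℝ) :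
    ∫ v, g v ∂betaMeasure a b =
      ∫ v in Ioo (0 : ℝ) 1, 1 / beta a b * v ^ (a - 1) * (1 - v) ^ (b - 1) * g v := by
  have hm : Measurable (betaPDF a b) := (measurable_betaPDFReal a b).ennreal_ofReal
  rw [betaMeasure, integral_withDensity_eq_integral_toReal_smul hm (by simp [betaPDF]),
    ← integral_indicator measurableSet_Ioo]
  congr 1
  ext v
  by_cases hv : v ∈ Ioo (0 : ℝ) 1
  · rw [indicator_of_mem hv, betaPDF, ENNReal.toReal_ofReal (betaPDFReal_pos hv.1 hv.2 ha hb).le,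
      betaPDFReal, if_pos ⟨hv.1, hv.2⟩, smul_eq_mul]
  · rw [indicator_of_notMem hv, betaPDF, betaPDFReal, if_neg (show ¬(0 < v ∧ v < 1) from hv)]
    simp

theorem ae_mem_Ioo_betaMeasure (a b : ℝ) : ∀ᵐ v ∂betaMeasure a b, v ∈ Ioo (0 : ℝ) 1 := by
  have hm : Measurable (betaPDF a b) := (measurable_betaPDFReal a b).ennreal_ofReal
  rw [betaMeasure, ae_withDensity_iff hm]
  refine Eventually.of_forall fun v hv => ?_
  by_contra h
  exact hv (by rw [betaPDF, betaPDFReal, if_neg (show ¬(0 < v ∧ v < 1) from h)]; simp)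

theorem integral_one_sub_pow_betaMeasure {a b : ℝ} (ha : 0 < a) (hb : 0 < b) (k : ℕ) :
    ∫ v, (1 - v) ^ k ∂betaMeasure a b = beta a (b + k) / beta a b := by
  have hbk : 0 < b + k := by positivity
  have := isProbabilityMeasureBeta ha hbk
  have h1 : ∫ _, (1 : ℝ) ∂betaMeasure a (b + k) = 1 := by simp
  rw [integral_betaMeasure ha hbk] at h1
  rw [integral_betaMeasure ha hb]
  have h0 := (beta_pos ha hb).ne'
  have hk0 := (beta_pos ha hbk).ne'
  have : ∀ v ∈ Ioo (0 : ℝ) 1, 1 / beta a b * v ^ (a - 1) * (1 - v) ^ (b - 1) * (1 - v) ^ k =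
      beta a (b + k) / beta a b *
        (1 / beta a (b + k) * v ^ (a - 1) * (1 - v) ^ (b + k - 1) * 1) := by
    intro v hv
    rw [show b + k - 1 = (b - 1) + k by ring, rpow_add_natCast (sub_pos.2 hv.2).ne']
    field_simp
  rw [setIntegral_congr_fun measurableSet_Ioo this, integral_const_mul, h1, mul_one]

theorem Gamma_half_add_natCast (k : ℕ) :
    Gamma (1 / 2 + k) = (Nat.factorial (2 * k)) * √π / (4 ^ k * Nat.factorial k) := by
  induction k with
  | zero => simp [-one_div, Gamma_one_half_eq]
  | succ k ih =>
    rw [show (1 / 2 + ((k + 1 : ℕ) : ℝ)) = (1 / 2 + k) + 1 by push_cast; ring,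
      Gamma_add_one (by positivity), ih, show 2 * (k + 1) = 2 * k + 1 + 1 by ring,
      Nat.factorial_succ, Nat.factorial_succ, Nat.factorial_succ]
    push_cast
    field_simp
    ring

theorem hasSum_integral_cosh_sqrt {lam : ℝ} (hlam : 0 < lam) (z : ℝ) :
    HasSum (fun k : ℕ => Gamma (lam + 1 / 2) *
        ((z / 2) ^ (2 * k) / (Nat.factorial k * Gamma (k + lam + 1 / 2))))
      (∫ v, cosh (z * √(1 - v)) ∂betaMeasure lam (1 / 2)) := by
  have := isProbabilityMeasureBeta hlam (one_half_pos (α := ℝ))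
  have h := hasSum_integral_of_dominated_convergence (μ := betaMeasure lam (1 / 2))
    (F := fun (k : ℕ) v => (z * √(1 - v)) ^ (2 * k) / (Nat.factorial (2 * k) : ℝ))
    (f := fun v => cosh (z * √(1 - v)))
    (fun k _ => z ^ (2 * k) / (Nat.factorial (2 * k) : ℝ))
    (fun k => by
      apply Measurable.aestronglyMeasurable
      fun_prop)
    (fun k => by
      filter_upwards [ae_mem_Ioo_betaMeasure lam (1 / 2)] with v hv
      have h1 : √(1 - v) ^ 2 ≤ 1 := by rw [sq_sqrt (sub_pos.2 hv.2).le]; linarith [hv.1]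
      rw [norm_of_nonneg (div_nonneg (by rw [pow_mul]; positivity) (by positivity))]
      refine div_le_div_of_nonneg_right ?_ (by positivity)
      rw [pow_mul, pow_mul]
      refine pow_le_pow_left₀ (sq_nonneg _) ?_ k
      rw [mul_pow]
      exact mul_le_of_le_one_right (sq_nonneg z) h1)
    (Eventually.of_forall fun v => (hasSum_cosh z).summable)
    (integrable_const _)
    (Eventually.of_forall fun v => hasSum_cosh _)
  convert! h using 2 with k
  have : ∫ v, (z * √(1 - v)) ^ (2 * k) / (Nat.factorial (2 * k) : ℝ) ∂betaMeasure lam (1 / 2) =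
      ∫ v, z ^ (2 * k) / (Nat.factorial (2 * k) : ℝ) * (1 - v) ^ k ∂betaMeasure lam (1 / 2) := by
    refine integral_congr_ae ?_
    filter_upwards [ae_mem_Ioo_betaMeasure lam (1 / 2)] with v hv
    rw [mul_pow, pow_mul (√(1 - v)), sq_sqrt (sub_pos.2 hv.2).le]
    ring
  rw [this, integral_const_mul, integral_one_sub_pow_betaMeasure hlam one_half_pos, beta, beta,
    Gamma_half_add_natCast, Gamma_one_half_eq, show (lam + (1 / 2 + k)) = k + lam + 1 / 2 by ring]
  have h1 := (Gamma_pos_of_pos hlam).ne'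
  have h2 := (Gamma_pos_of_pos (show 0 < lam + 1 / 2 by positivity)).ne'
  have h3 := (Gamma_pos_of_pos (show 0 < k + lam + 1 / 2 by positivity)).ne'
  have h4 : √π ≠ 0 := by positivity
  field_simp
  rw [show (4 : ℝ) = 2 ^ 2 by norm_num, ← pow_mul, ← mul_pow]
  field_simp

theorem besselI_eq_integral_cosh {lam z : ℝ} (hlam : 0 < lam) (hz : 0 < z) :
    besselI (lam - 1 / 2) z = (z / 2) ^ (lam - 1 / 2) / Gamma (lam + 1 / 2) *
      ∫ v, cosh (z * √(1 - v)) ∂betaMeasure lam (1 / 2) := by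
  rw [← (hasSum_integral_cosh_sqrt hlam z).tsum_eq, ← tsum_mul_left, besselI]
  congr 1
  ext k
  have h2 := (Gamma_pos_of_pos (show 0 < lam + 1 / 2 by positivity)).ne'
  rw [rpow_add (by positivity), show (k : ℝ) + (lam - 1 / 2) + 1 = k + lam + 1 / 2 by ring,
    show (2 * (k : ℝ)) = ((2 * k : ℕ) : ℝ) by push_cast; ring, rpow_natCast]
  field_simp

/-- A function on the half-line dominated by an integrable power at zero and at infinity is
integrable. -/
theorem integrableOn_Ioi_of_rpow_bounds {g : ℝ → ℝ} {a b A : ℝ} (ha : -1 < a) (hb : b < -1)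
    (hg : AEStronglyMeasurable g (volume.restrict (Ioi 0)))
    (h0 : ∀ x ∈ Ioc (0 : ℝ) 1, |g x| ≤ A * x ^ a) (h1 : ∀ x ∈ Ioi (1 : ℝ), |g x| ≤ A * x ^ b) :
    IntegrableOn g (Ioi 0) := by
  rw [← Ioc_union_Ioi_eq_Ioi zero_le_one]
  refine IntegrableOn.union ?_ ?_
  · have hi : IntegrableOn (fun x : ℝ => A * x ^ a) (Ioc 0 1) := by
      rw [← intervalIntegrable_iff_integrableOn_Ioc_of_le zero_le_one]
      exact (intervalIntegral.intervalIntegrable_rpow' ha).const_mul A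
    refine hi.mono' (hg.mono_measure (Measure.restrict_mono Ioc_subset_Ioi_self le_rfl)) ?_
    exact ae_restrict_of_forall_mem measurableSet_Ioc h0
  · have hi : IntegrableOn (fun x : ℝ => A * x ^ b) (Ioi 1) :=
      (integrableOn_Ioi_rpow_of_lt hb one_pos).const_mul A
    refine hi.mono' (hg.mono_measure
      (Measure.restrict_mono (Ioi_subset_Ioi zero_le_one) le_rfl)) ?_
    exact ae_restrict_of_forall_mem measurableSet_Ioi h1

theorem integrableOn_rpow_mul_one_add_rpow {l q : ℝ} (hl : 0 < l) (hq : l < q) :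
    IntegrableOn (fun w : ℝ => w ^ (l - 1) * (1 + w) ^ (-q)) (Ioi 0) := by
  refine integrableOn_Ioi_of_rpow_bounds (a := l - 1) (b := l - 1 - q) (A := 1)
    (by linarith) (by linarith) (Measurable.aestronglyMeasurable (by fun_prop)) ?_ ?_
  · intro x hx
    have := hx.1
    rw [abs_of_nonneg (by positivity), one_mul]
    exact mul_le_of_le_one_right (by positivity)
      (rpow_le_one_of_one_le_of_nonpos (by linarith) (by linarith))
  · intro x hx
    have : 0 < x := lt_trans one_pos hx
    rw [abs_of_nonneg (by positivity), one_mul, sub_eq_add_neg _ q, rpow_add this]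
    gcongr ?_ * ?_
    exact rpow_le_rpow_of_nonpos this (by linarith) (by linarith)

theorem rpow_mul_add_mul_rpow_eq {l q A b w : ℝ} (hA : 0 < A) (hb : 0 < b) (hw : 0 < w) :
    w ^ (l - 1) * (A + b * w) ^ (-q) =
      A ^ (-q) * (A / b) ^ (l - 1) * ((b / A * w) ^ (l - 1) * (1 + b / A * w) ^ (-q)) := by
  have h : (A / b) ^ (l - 1) * (b / A) ^ (l - 1) = 1 := by
    rw [← mul_rpow (by positivity) (by positivity), show A / b * (b / A) = 1 by field_simp,
      one_rpow]
  rw [show A + b * w = A * (1 + b / A * w) by field_simp, mul_rpow hA.le (by positivity),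
    mul_rpow (by positivity) hw.le]
  linear_combination (-(w ^ (l - 1) * A ^ (-q) * (1 + b / A * w) ^ (-q))) * h

theorem integrableOn_rpow_mul_add_mul_rpow {l q A b : ℝ} (hl : 0 < l) (hq : l < q)
    (hA : 0 < A) (hb : 0 < b) :
    IntegrableOn (fun w : ℝ => w ^ (l - 1) * (A + b * w) ^ (-q)) (Ioi 0) := by
  refine IntegrableOn.congr_fun ?_ (fun w hw => (rpow_mul_add_mul_rpow_eq hA hb hw).symm)
    measurableSet_Ioi
  refine Integrable.const_mul ?_ _
  have := (integrableOn_Ioi_comp_mul_left_iff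
    (fun w : ℝ => w ^ (l - 1) * (1 + w) ^ (-q)) 0 (div_pos hb hA)).2
    (by simpa using integrableOn_rpow_mul_one_add_rpow hl hq)
  exact this

theorem integral_rpow_mul_add_mul_rpow {l q A b : ℝ} (hA : 0 < A) (hb : 0 < b) :
    ∫ w in Ioi (0 : ℝ), w ^ (l - 1) * (A + b * w) ^ (-q) =
      (∫ w in Ioi (0 : ℝ), w ^ (l - 1) * (1 + w) ^ (-q)) * (b ^ (-l) * A ^ (l - q)) := by
  rw [setIntegral_congr_fun measurableSet_Ioi (fun w hw => rpow_mul_add_mul_rpow_eq hA hb hw),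
    integral_const_mul, integral_comp_mul_left_Ioi
      (fun w : ℝ => w ^ (l - 1) * (1 + w) ^ (-q)) 0 (div_pos hb hA), mul_zero, smul_eq_mul]
  have h1 : (A / b) ^ (l - 1) * (b / A)⁻¹ = A ^ l * b ^ (-l) := by
    rw [inv_div, ← rpow_add_one (by positivity), sub_add_cancel, div_rpow hA.le hb.le,
      rpow_neg hb.le, div_eq_mul_inv]
  rw [mul_assoc, ← mul_assoc _ (b / A)⁻¹, h1, sub_eq_add_neg l q, rpow_add hA]
  ring

/-- The measure on `[-1, 1]` proportional to `(1 - u ^ 2) ^ (lam - 1) du`. -/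
def angularMeasure (lam : ℝ) : Measure ℝ :=
  (betaMeasure lam (1 / 2)).map (fun w => √(1 - w)) +
    (betaMeasure lam (1 / 2)).map (fun w => -√(1 - w))

theorem isFiniteMeasure_angularMeasure {lam : ℝ} (hlam : 0 < lam) :
    IsFiniteMeasure (angularMeasure lam) := by
  have := isProbabilityMeasureBeta hlam (one_half_pos (α := ℝ))
  unfold angularMeasure
  infer_instance

theorem ae_angularMeasure_mem_Icc (lam : ℝ) :
    ∀ᵐ u ∂angularMeasure lam, u ∈ Icc (-1 : ℝ) 1 := by
  rw [angularMeasure, ae_add_measure_iff,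
    ae_map_iff (p := (· ∈ Icc (-1 : ℝ) 1)) (by fun_prop) measurableSet_Icc,
    ae_map_iff (p := (· ∈ Icc (-1 : ℝ) 1)) (by fun_prop) measurableSet_Icc]
  have h : ∀ᵐ w ∂betaMeasure lam (1 / 2), √(1 - w) ≤ 1 := by
    filter_upwards [ae_mem_Ioo_betaMeasure lam (1 / 2)] with w hw
    exact sqrt_le_one.2 (by linarith [hw.1])
  constructor <;> filter_upwards [h] with w hw <;> constructor <;>
    linarith [sqrt_nonneg (1 - w)]

theorem integral_angularMeasure {lam : ℝ} {g : ℝ → ℝ} (hg : Measurable g)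
    (h1 : Integrable (fun w => g (√(1 - w))) (betaMeasure lam (1 / 2)))
    (h2 : Integrable (fun w => g (-√(1 - w))) (betaMeasure lam (1 / 2))) :
    ∫ u, g u ∂angularMeasure lam =
      ∫ w, g (√(1 - w)) + g (-√(1 - w)) ∂betaMeasure lam (1 / 2) := by
  have m1 : AEMeasurable (fun w : ℝ => √(1 - w)) (betaMeasure lam (1 / 2)) := by fun_prop
  have m2 : AEMeasurable (fun w : ℝ => -√(1 - w)) (betaMeasure lam (1 / 2)) := by fun_prop
  have hs := hg.aestronglyMeasurable (μ := (betaMeasure lam (1 / 2)).map (fun w => √(1 - w)))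
  have hs' := hg.aestronglyMeasurable (μ := (betaMeasure lam (1 / 2)).map (fun w => -√(1 - w)))
  rw [angularMeasure, integral_add_measure ((integrable_map_measure hs m1).2 h1)
    ((integrable_map_measure hs' m2).2 h2), integral_map m1 hs, integral_map m2 hs',
    integral_add h1 h2]

theorem besselI_eq_integral_angularMeasure {lam z : ℝ} (hlam : 0 < lam) (hz : 0 < z) :
    besselI (lam - 1 / 2) z = (z / 2) ^ (lam - 1 / 2) / (2 * Gamma (lam + 1 / 2)) *
      ∫ u, exp (z * u) ∂angularMeasure lam := by
  have := isProbabilityMeasureBeta hlam (one_half_pos (α := ℝ))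
  have hb : ∀ c : ℝ, Integrable (fun w => exp (c * √(1 - w))) (betaMeasure lam (1 / 2)) := by
    intro c
    refine (integrable_const (exp |c|)).mono' (Measurable.aestronglyMeasurable (by fun_prop)) ?_
    filter_upwards [ae_mem_Ioo_betaMeasure lam (1 / 2)] with w hw
    rw [norm_of_nonneg (exp_pos _).le, exp_le_exp]
    refine (le_abs_self _).trans ?_
    rw [abs_mul, abs_of_nonneg (sqrt_nonneg _)]
    exact mul_le_of_le_one_right (abs_nonneg c) (sqrt_le_one.2 (by linarith [hw.1]))
  rw [besselI_eq_integral_cosh hlam hz,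
    integral_angularMeasure (g := fun u => exp (z * u)) (by fun_prop) (hb z)
    (by simpa only [neg_mul, mul_neg] using hb (-z))]
  have h : ∀ w : ℝ, exp (z * √(1 - w)) + exp (z * -√(1 - w)) = 2 * cosh (z * √(1 - w)) := by
    intro w
    rw [cosh_eq, mul_neg]
    ring
  simp only [h, integral_const_mul]
  have h2 := (Gamma_pos_of_pos (show 0 < lam + 1 / 2 by positivity)).ne'
  field_simp

theorem integral_betaMeasure_add_mul_rpow_le {l q : ℝ} (hl : 0 < l) (hq : l < q) :
    ∃ C : ℝ, 0 < C ∧ ∀ A b : ℝ, 0 < A → 0 < b →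
      ∫ w, (A + b * w) ^ (-q) ∂betaMeasure l (1 / 2) ≤ C * (b ^ (-l) * A ^ (l - q)) := by
  have := isProbabilityMeasureBeta hl (one_half_pos (α := ℝ))
  set M := ∫ w in Ioi (0 : ℝ), w ^ (l - 1) * (1 + w) ^ (-q) with hM
  have hM0 : 0 ≤ M := setIntegral_nonneg measurableSet_Ioi fun w hw => by
    have : 0 < w := hw
    positivity
  have hB := beta_pos hl (one_half_pos (α := ℝ))
  set B := beta l (1 / 2)
  refine ⟨2 ^ l + 1 / B * 2 * M, by positivity, fun A b hA hb => ?_⟩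
  have hint : IntegrableOn (fun w : ℝ => 1 / B * w ^ (l - 1) * (1 - w) ^ ((1 / 2 : ℝ) - 1))
      (Ioo 0 1) := by
    by_contra h
    have h1 : ∫ _, (1 : ℝ) ∂betaMeasure l (1 / 2) = 1 := by
      rw [integral_const, probReal_univ, smul_eq_mul, one_mul]
    rw [integral_betaMeasure hl one_half_pos] at h1
    simp only [mul_one] at h1
    rw [integral_undef h] at h1
    exact zero_ne_one h1
  have hone : ∫ w in Ioo (0 : ℝ) 1, 1 / B * w ^ (l - 1) * (1 - w) ^ ((1 / 2 : ℝ) - 1) = 1 := by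
    have h1 : ∫ _, (1 : ℝ) ∂betaMeasure l (1 / 2) = 1 := by
      rw [integral_const, probReal_univ, smul_eq_mul, one_mul]
    rw [integral_betaMeasure hl one_half_pos] at h1
    simpa only [mul_one] using h1
  have hint2 := integrableOn_rpow_mul_add_mul_rpow hl hq hA hb
  have hsub := hint2.mono_set (s := Ioo 0 1) Ioo_subset_Ioi_self
  rw [integral_betaMeasure hl one_half_pos]
  calc _ ≤ ∫ w in Ioo (0 : ℝ) 1, (2 ^ l * (b ^ (-l) * A ^ (l - q))) *
          (1 / B * w ^ (l - 1) * (1 - w) ^ ((1 / 2 : ℝ) - 1)) +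
          1 / B * 2 * (w ^ (l - 1) * (A + b * w) ^ (-q)) := by
        refine integral_mono_of_nonneg ?_ ((hint.const_mul _).add (hsub.const_mul _)) ?_
        · refine ae_restrict_of_forall_mem measurableSet_Ioo fun w hw => ?_
          have h0 := hw.1
          have h1 := sub_pos.2 hw.2
          simp only [Pi.zero_apply]
          positivity
        · refine ae_restrict_of_forall_mem measurableSet_Ioo fun w hw => ?_
          have h0 := hw.1
          have h1 := sub_pos.2 hw.2
          have hD : 0 < A + b * w := by positivity
          simp only
          rcases le_total w (1 / 2) with hw2 | hw2
          · have h3 : (1 - w) ^ ((1 / 2 : ℝ) - 1) ≤ 2 := by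
              calc (1 - w) ^ ((1 / 2 : ℝ) - 1) ≤ (1 / 2 : ℝ) ^ ((1 / 2 : ℝ) - 1) :=
                    rpow_le_rpow_of_nonpos (by norm_num) (by linarith) (by norm_num)
                _ ≤ (1 / 2 : ℝ) ^ (-1 : ℝ) :=
                    rpow_le_rpow_of_exponent_ge (by norm_num) (by norm_num) (by norm_num)
                _ = 2 := by rw [rpow_neg_one]; norm_num
            have h4 : 1 / B * w ^ (l - 1) * (1 - w) ^ ((1 / 2 : ℝ) - 1) * (A + b * w) ^ (-q) ≤
                1 / B * w ^ (l - 1) * 2 * (A + b * w) ^ (-q) := by gcongr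
            have h5 : 0 ≤ (2 ^ l * (b ^ (-l) * A ^ (l - q))) *
              (1 / B * w ^ (l - 1) * (1 - w) ^ ((1 / 2 : ℝ) - 1)) := by positivity
            linarith
          · have h3 : (A + b * w) ^ (-q) ≤ 2 ^ l * (b ^ (-l) * A ^ (l - q)) := by
              have e : (2 : ℝ) ^ l * b ^ (-l) = (b / 2) ^ (-l) := by
                rw [rpow_neg hb.le, rpow_neg (by positivity), div_rpow hb.le (by norm_num)]
                field_simp
              rw [← mul_assoc, e, show -q = -l + (l - q) by ring, rpow_add hD]
              refine mul_le_mul ?_ ?_ (by positivity) (by positivity)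
              · exact rpow_le_rpow_of_nonpos (by positivity) (by nlinarith) (by linarith)
              · exact rpow_le_rpow_of_nonpos hA (by nlinarith) (by linarith)
            have h4 := mul_le_mul_of_nonneg_left h3 (show 0 ≤ 1 / B * w ^ (l - 1) *
              (1 - w) ^ ((1 / 2 : ℝ) - 1) by positivity)
            have h5 : 0 ≤ 1 / B * 2 * (w ^ (l - 1) * (A + b * w) ^ (-q)) := by positivity
            linarith
    _ ≤ 2 ^ l * (b ^ (-l) * A ^ (l - q)) +
          1 / B * 2 * ∫ w in Ioi (0 : ℝ), w ^ (l - 1) * (A + b * w) ^ (-q) := by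
        rw [integral_add (hint.const_mul _) (hsub.const_mul _), integral_const_mul,
          integral_const_mul, hone, mul_one]
        gcongr 2 ^ l * (b ^ (-l) * A ^ (l - q)) + 1 / B * 2 * ?_
        refine setIntegral_mono_set hint2 ?_ Ioo_subset_Ioi_self.eventuallyLE
        refine ae_restrict_of_forall_mem measurableSet_Ioi fun w hw => ?_
        have h0 : 0 < w := hw
        simp only [Pi.zero_apply]
        positivity
    _ = _ := by rw [integral_rpow_mul_add_mul_rpow hA hb]; ring

theorem integral_angularMeasure_add_mul_rpow_le {l q : ℝ} (hl : 0 < l) (hq : l < q) :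
    ∃ C : ℝ, 0 < C ∧ ∀ A b : ℝ, 0 < A → 0 < b →
      ∫ u, (A + b * (1 - u)) ^ (-q) ∂angularMeasure l ≤ C * (b ^ (-l) * A ^ (l - q)) := by
  have := isProbabilityMeasureBeta hl (one_half_pos (α := ℝ))
  obtain ⟨C, hC, hle⟩ := integral_betaMeasure_add_mul_rpow_le hl hq
  refine ⟨2 * C * (1 / 2) ^ (-l), by positivity, fun A b hA hb => ?_⟩
  have hint : ∀ g : ℝ → ℝ, Measurable g →
      (∀ w ∈ Ioo (0 : ℝ) 1, 0 ≤ g w) →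
      Integrable (fun w => (A + b * g w) ^ (-q)) (betaMeasure l (1 / 2)) := by
    intro g hg h0
    refine (integrable_const (A ^ (-q))).mono' (Measurable.aestronglyMeasurable (by fun_prop)) ?_
    filter_upwards [ae_mem_Ioo_betaMeasure l (1 / 2)] with w hw
    have h1 : 0 ≤ b * g w := mul_nonneg hb.le (h0 w hw)
    rw [norm_of_nonneg (by positivity)]
    exact rpow_le_rpow_of_nonpos hA (by linarith) (by linarith)
  have hs : ∀ w ∈ Ioo (0 : ℝ) 1, w / 2 ≤ 1 - √(1 - w) := by
    intro w hw
    have : √(1 - w) ≤ 1 - w / 2 := sqrt_le_iff.2 ⟨by linarith [hw.2], by nlinarith [sq_nonneg w]⟩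
    linarith
  have i1 := hint (fun w => 1 - √(1 - w)) (by fun_prop)
    (fun w hw => by linarith [hs w hw, hw.1])
  have i2 := hint (fun w => 1 - -√(1 - w)) (by fun_prop)
    (fun w hw => by linarith [sqrt_nonneg (1 - w)])
  have i3 := hint (fun w => w / 2) (by fun_prop) (fun w hw => by linarith [hw.1])
  rw [integral_angularMeasure (g := fun u => (A + b * (1 - u)) ^ (-q)) (by fun_prop) i1 i2]
  calc _ ≤ ∫ w, 2 * (A + b * (w / 2)) ^ (-q) ∂betaMeasure l (1 / 2) := by
        refine integral_mono_ae (i1.add i2) (i3.const_mul 2) ?_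
        filter_upwards [ae_mem_Ioo_betaMeasure l (1 / 2)] with w hw
        have h0 := hw.1
        have h1 := hs w hw
        have hA' : 0 < A + b * (w / 2) := by positivity
        have e1 : (A + b * (1 - √(1 - w))) ^ (-q) ≤ (A + b * (w / 2)) ^ (-q) :=
          rpow_le_rpow_of_nonpos hA' (by gcongr) (by linarith)
        have e2 : (A + b * (1 - -√(1 - w))) ^ (-q) ≤ (A + b * (w / 2)) ^ (-q) :=
          rpow_le_rpow_of_nonpos hA' (by gcongr; linarith [sqrt_nonneg (1 - w)]) (by linarith)
        linarith
    _ = 2 * ∫ w, (A + b / 2 * w) ^ (-q) ∂betaMeasure l (1 / 2) := by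
        rw [integral_const_mul]
        congr! 5
        ring
    _ ≤ 2 * (C * ((b / 2) ^ (-l) * A ^ (l - q))) := by
        gcongr
        exact hle A (b / 2) hA (by positivity)
    _ = _ := by
        rw [div_eq_mul_one_div, mul_rpow hb.le (by norm_num)]
        ring

/-- The squared distance between two points of the plane at distances `x`, `y` from the origin,
`u` being the cosine of the angle between them. -/
def chordSq (x y u : ℝ) : ℝ := x ^ 2 + y ^ 2 - 2 * x * y * u

theorem chordSq_eq_sq_sub_add (x y u : ℝ) :
    chordSq x y u = (x - y) ^ 2 + 2 * (x * y) * (1 - u) := by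
  unfold chordSq
  ring

theorem chordSq_eq_sq_add (x y u : ℝ) :
    chordSq x y u = (x - y * u) ^ 2 + y ^ 2 * (1 - u ^ 2) := by
  unfold chordSq
  ring

@[fun_prop]
theorem measurable_chordSq {γ : Type*} [MeasurableSpace γ] {f g h : γ → ℝ} (hf : Measurable f)
    (hg : Measurable g) (hh : Measurable h) : Measurable fun c => chordSq (f c) (g c) (h c) := by
  unfold chordSq
  fun_prop

theorem sq_sub_le_chordSq {x y u : ℝ} (hx : 0 < x) (hy : 0 < y) (hu : u ∈ Icc (-1 : ℝ) 1) :
    (x - y) ^ 2 ≤ chordSq x y u := by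
  rw [chordSq_eq_sq_sub_add]
  have := mul_nonneg (mul_pos hx hy).le (sub_nonneg.2 hu.2)
  linarith

theorem besselHeatKernel_eq {lam : ℝ} (hlam : 0 < lam) : ∃ c : ℝ, 0 < c ∧ ∀ s x y : ℝ,
    0 < s → 0 < x → 0 < y → besselHeatKernel lam s x y =
      c * (x * y) ^ lam * s ^ (-lam - 1 / 2) *
        ∫ u, exp (-(chordSq x y u / (4 * s))) ∂angularMeasure lam := by
  have hG := Gamma_pos_of_pos (show 0 < lam + 1 / 2 by positivity)
  refine ⟨4 ^ (-(lam - 1 / 2)) / (4 * Gamma (lam + 1 / 2)), by positivity,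
    fun s x y hs hx hy => ?_⟩
  have hxy : 0 < x * y := by positivity
  have h1 : ∀ u, exp (-(chordSq x y u / (4 * s))) =
      exp (x * y / (2 * s) * u) * exp (-(x ^ 2 + y ^ 2) / (4 * s)) := by
    intro u
    rw [← exp_add, chordSq]
    congr 1
    field_simp
    ring
  have h2 : √(x * y) / (2 * s) * (x * y / (2 * s) / 2) ^ (lam - 1 / 2) =
      4 ^ (-(lam - 1 / 2)) / 2 * (x * y) ^ lam * s ^ (-lam - 1 / 2) := by
    rw [show x * y / (2 * s) / 2 = x * y * (4 * s)⁻¹ by field_simp; norm_num,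
      mul_rpow hxy.le (by positivity), inv_rpow (by positivity), ← rpow_neg (by positivity),
      mul_rpow (by norm_num) hs.le, sqrt_eq_rpow,
      show (x * y) ^ lam = (x * y) ^ (1 / 2 : ℝ) * (x * y) ^ (lam - 1 / 2) by
        rw [← rpow_add hxy]; ring_nf,
      show s ^ (-lam - 1 / 2) = s ^ (-(lam - 1 / 2)) * s⁻¹ by
        rw [← rpow_neg_one, ← rpow_add hs]; ring_nf]
    field_simp
  rw [besselHeatKernel, besselI_eq_integral_angularMeasure hlam (by positivity)]
  simp only [h1, integral_mul_const]
  rw [show ∀ a b c d e : ℝ, a * (b / c * d) * e = (a * b) * (d * e) / c by intros; ring, h2]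
  field_simp
  ring

theorem integral_rpow_mul_exp_neg_div {a A : ℝ} (ha : 0 < a) (hA : 0 < A) :
    ∫ s in Ioi (0 : ℝ), s ^ (-a - 1) * exp (-(A / (4 * s))) = 4 ^ a * Gamma a * A ^ (-a) := by
  have h := integral_comp_rpow_Ioi (fun y : ℝ => y ^ (a - 1) * exp (-(A / 4 * y)))
    (p := -1) (by norm_num)
  rw [integral_rpow_mul_exp_neg_mul_Ioi ha (by positivity)] at h
  rw [show 4 ^ a * Gamma a * A ^ (-a) = (1 / (A / 4)) ^ a * Gamma a by
    rw [one_div_div, div_rpow (by norm_num) hA.le, rpow_neg hA.le]; ring, ← h]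
  refine setIntegral_congr_fun measurableSet_Ioi fun s hs => ?_
  have hs : 0 < s := hs
  simp only [abs_neg, abs_one, one_mul, smul_eq_mul]
  rw [← mul_assoc, ← rpow_mul hs.le, ← rpow_add hs, rpow_neg_one]
  congr 2
  · ring
  · field_simp

theorem integrableOn_rpow_mul_exp_neg_div {a A : ℝ} (ha : 0 < a) (hA : 0 < A) :
    IntegrableOn (fun s : ℝ => s ^ (-a - 1) * exp (-(A / (4 * s)))) (Ioi 0) := by
  by_contra h
  have h1 := integral_rpow_mul_exp_neg_div ha hA
  rw [integral_undef h] at h1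
  have := Gamma_pos_of_pos ha
  have : 0 < 4 ^ a * Gamma a * A ^ (-a) := by positivity
  linarith

theorem besselPoissonKernel_eq {lam : ℝ} (hlam : 0 < lam) : ∃ c : ℝ, 0 < c ∧ ∀ t x y : ℝ,
    0 < t → 0 < x → 0 < y → besselPoissonKernel lam t x y =
      c * t * ((x * y) ^ lam *
        ∫ u, (t ^ 2 + chordSq x y u) ^ (-(lam + 1)) ∂angularMeasure lam) := by
  obtain ⟨c, hc, hW⟩ := besselHeatKernel_eq hlam
  have hfin := isFiniteMeasure_angularMeasure hlam
  have hG := Gamma_pos_of_pos (show 0 < lam + 1 by positivity)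
  refine ⟨1 / (2 * √π) * c * (4 ^ (lam + 1) * Gamma (lam + 1)), by positivity,
    fun t x y ht hx hy => ?_⟩
  have h1 : ∀ s ∈ Ioi (0 : ℝ),
      s ^ (-(3 : ℝ) / 2) * exp (-t ^ 2 / (4 * s)) * besselHeatKernel lam s x y =
      c * (x * y) ^ lam * ∫ u, s ^ (-(lam + 1) - 1) *
        exp (-((t ^ 2 + chordSq x y u) / (4 * s))) ∂angularMeasure lam := by
    intro s hs
    have hs : 0 < s := hs
    rw [hW s x y hs hx hy]
    have e : ∀ u, s ^ (-(lam + 1) - 1) * exp (-((t ^ 2 + chordSq x y u) / (4 * s))) =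
        s ^ (-(3 : ℝ) / 2) * s ^ (-lam - 1 / 2) * exp (-t ^ 2 / (4 * s)) *
          exp (-(chordSq x y u / (4 * s))) := by
      intro u
      rw [← rpow_add hs, mul_assoc, ← exp_add]
      congr 2
      · ring
      · ring
    simp only [e, integral_const_mul]
    ring
  have hprod : Integrable (Function.uncurry fun s u : ℝ => s ^ (-(lam + 1) - 1) *
      exp (-((t ^ 2 + chordSq x y u) / (4 * s))))
      ((volume.restrict (Ioi 0)).prod (angularMeasure lam)) := by
    have hi := (integrableOn_rpow_mul_exp_neg_div (a := lam + 1) (A := t ^ 2) (by positivity)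
      (by positivity)).comp_fst (angularMeasure lam)
    refine hi.mono' (Measurable.aestronglyMeasurable ?_) ?_
    · simp only [Function.uncurry_def]
      fun_prop
    · have ha : ∀ᵐ z ∂(volume.restrict (Ioi (0 : ℝ))).prod (angularMeasure lam),
          z.1 ∈ Ioi (0 : ℝ) := Measure.quasiMeasurePreserving_fst.ae
            (ae_restrict_mem measurableSet_Ioi)
      have hb : ∀ᵐ z ∂(volume.restrict (Ioi (0 : ℝ))).prod (angularMeasure lam),
          z.2 ∈ Icc (-1 : ℝ) 1 := Measure.quasiMeasurePreserving_snd.ae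
            (ae_angularMeasure_mem_Icc lam)
      filter_upwards [ha, hb] with z hz1 hz2
      have hs : 0 < z.1 := hz1
      have hD := (sq_nonneg (x - y)).trans (sq_sub_le_chordSq hx hy hz2)
      simp only [Function.uncurry_def]
      rw [norm_of_nonneg (by positivity)]
      gcongr
      linarith
  rw [besselPoissonKernel, setIntegral_congr_fun measurableSet_Ioi h1, integral_const_mul,
    integral_integral_swap hprod]
  have h2 : ∫ u, (∫ s in Ioi (0 : ℝ), s ^ (-(lam + 1) - 1) *
        exp (-((t ^ 2 + chordSq x y u) / (4 * s)))) ∂angularMeasure lam =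
      ∫ u, 4 ^ (lam + 1) * Gamma (lam + 1) * (t ^ 2 + chordSq x y u) ^ (-(lam + 1))
        ∂angularMeasure lam := by
    refine integral_congr_ae ?_
    filter_upwards [ae_angularMeasure_mem_Icc lam] with u hu
    have hD := (sq_nonneg (x - y)).trans (sq_sub_le_chordSq hx hy hu)
    exact integral_rpow_mul_exp_neg_div (by positivity) (by positivity)
  rw [h2, integral_const_mul]
  ring

/-- The kernel `(x y) ^ lam * ∫ |x - y e^{iθ}| ^ (-2 q)`, averaged over the angular measure. -/
def angularKernel (lam q x y : ℝ) : ℝ :=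
  (x * y) ^ lam * ∫ u, chordSq x y u ^ (-q) ∂angularMeasure lam

theorem integrable_chordSq_rpow {lam q x y : ℝ} (hlam : 0 < lam) (hq : 0 < q) (hx : 0 < x)
    (hy : 0 < y) (hxy : x ≠ y) :
    Integrable (fun u => chordSq x y u ^ (-q)) (angularMeasure lam) := by
  have hfin := isFiniteMeasure_angularMeasure hlam
  refine (integrable_const (((x - y) ^ 2) ^ (-q))).mono'
    (Measurable.aestronglyMeasurable (by fun_prop)) ?_
  filter_upwards [ae_angularMeasure_mem_Icc lam] with u hu
  have h0 : 0 < (x - y) ^ 2 := by have := sub_ne_zero.2 hxy; positivity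
  have h1 := sq_sub_le_chordSq hx hy hu
  rw [norm_of_nonneg (rpow_nonneg (h0.le.trans h1) _)]
  exact rpow_le_rpow_of_nonpos h0 h1 (by linarith)

theorem angularKernel_nonneg {lam q x y : ℝ} (hx : 0 < x) (hy : 0 < y) :
    0 ≤ angularKernel lam q x y := by
  refine mul_nonneg (by positivity) (integral_nonneg_of_ae ?_)
  filter_upwards [ae_angularMeasure_mem_Icc lam] with u hu
  exact rpow_nonneg ((sq_nonneg _).trans (sq_sub_le_chordSq hx hy hu)) _

theorem measurable_angularKernel {lam : ℝ} (hlam : 0 < lam) (q x : ℝ) :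
    Measurable (angularKernel lam q x) := by
  have hfin := isFiniteMeasure_angularMeasure hlam
  unfold angularKernel
  refine Measurable.mul (by fun_prop) ?_
  refine StronglyMeasurable.measurable ?_
  refine StronglyMeasurable.integral_prod_right (f := fun y u => chordSq x y u ^ (-q)) ?_
  refine Measurable.stronglyMeasurable ?_
  simp only [Function.uncurry_def]
  fun_prop

section PoissonIntegral

variable {lam σ : ℝ}

theorem integral_rpow_mul_sq_add_rpow {D : ℝ} (hD : 0 < D) :
    ∫ t in Ioi (0 : ℝ), t ^ (2 * σ) * (t ^ 2 + D) ^ (-(lam + 1)) =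
      1 / 2 * (∫ w in Ioi (0 : ℝ), w ^ (σ + 1 / 2 - 1) * (1 + w) ^ (-(lam + 1))) *
        D ^ (-(lam + 1 / 2 - σ)) := by
  have h := integral_comp_rpow_Ioi_of_pos
    (g := fun w : ℝ => w ^ (σ + 1 / 2 - 1) * (D + 1 * w) ^ (-(lam + 1))) (p := 2) two_pos
  rw [integral_rpow_mul_add_mul_rpow hD one_pos, one_rpow, one_mul,
    show σ + 1 / 2 - (lam + 1) = -(lam + 1 / 2 - σ) by ring] at h
  rw [mul_assoc, ← h, ← integral_const_mul]
  refine setIntegral_congr_fun measurableSet_Ioi fun t ht => ?_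
  have ht : 0 < t := ht
  simp only [smul_eq_mul]
  rw [← rpow_mul ht.le, rpow_two, one_mul, add_comm D,
    show t ^ (2 * σ) = t ^ ((2 : ℝ) - 1) * t ^ (2 * (σ + 1 / 2 - 1)) by
      rw [← rpow_add ht]; ring_nf]
  ring

theorem integral_beta_prime_pos {l q : ℝ} (hl : 0 < l) (hq : l < q) :
    0 < ∫ w in Ioi (0 : ℝ), w ^ (l - 1) * (1 + w) ^ (-q) := by
  rw [setIntegral_pos_iff_support_of_nonneg_ae _ (integrableOn_rpow_mul_one_add_rpow hl hq)]
  · have : Ioi (0 : ℝ) ⊆ Function.support (fun w : ℝ => w ^ (l - 1) * (1 + w) ^ (-q)) := by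
      intro w hw
      have hw : 0 < w := hw
      exact (show 0 < w ^ (l - 1) * (1 + w) ^ (-q) by positivity).ne'
    rw [inter_eq_self_of_subset_right this]
    simp
  · refine ae_restrict_of_forall_mem measurableSet_Ioi fun w hw => ?_
    have hw : 0 < w := hw
    simp only [Pi.zero_apply]
    positivity

theorem integrableOn_rpow_mul_sq_add_rpow {D : ℝ} (hσ : 0 < σ) (hlam : σ < lam + 1 / 2)
    (hD : 0 < D) :
    IntegrableOn (fun t : ℝ => t ^ (2 * σ) * (t ^ 2 + D) ^ (-(lam + 1))) (Ioi 0) := by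
  by_contra h
  have h1 := integral_rpow_mul_sq_add_rpow (lam := lam) (σ := σ) hD
  rw [integral_undef h] at h1
  have := integral_beta_prime_pos (l := σ + 1 / 2) (q := lam + 1) (by positivity) (by linarith)
  have : 0 < 1 / 2 * (∫ w in Ioi (0 : ℝ), w ^ (σ + 1 / 2 - 1) * (1 + w) ^ (-(lam + 1))) *
        D ^ (-(lam + 1 / 2 - σ)) := by positivity
  linarith

end PoissonIntegral

section PoissonReduction

variable {lam σ : ℝ}

/-- The Bessel–Poisson kernel divided by `t`, up to a multiplicative constant. -/
def poissonProfile (lam x t y : ℝ) : ℝ :=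
  (x * y) ^ lam * ∫ u, (t ^ 2 + chordSq x y u) ^ (-(lam + 1)) ∂angularMeasure lam

theorem measurable_uncurry_poissonProfile (hlam : 0 < lam) (x : ℝ) :
    Measurable (Function.uncurry (poissonProfile lam x)) := by
  have hfin := isFiniteMeasure_angularMeasure hlam
  simp only [Function.uncurry_def, poissonProfile]
  refine Measurable.mul (by fun_prop) (StronglyMeasurable.measurable ?_)
  refine StronglyMeasurable.integral_prod_right
    (f := fun (z : ℝ × ℝ) u => (z.1 ^ 2 + chordSq x z.2 u) ^ (-(lam + 1)))
    (Measurable.stronglyMeasurable ?_)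
  simp only [Function.uncurry_def]
  fun_prop

theorem poissonProfile_nonneg {x t y : ℝ} (hx : 0 < x) (hy : 0 < y) :
    0 ≤ poissonProfile lam x t y := by
  refine mul_nonneg (by positivity) (integral_nonneg_of_ae ?_)
  filter_upwards [ae_angularMeasure_mem_Icc lam] with u hu
  have hD := (sq_nonneg (x - y)).trans (sq_sub_le_chordSq hx hy hu)
  simp only [Pi.zero_apply]
  positivity

theorem poissonProfile_le {x t y : ℝ} (hlam : 0 < lam) (hσ : 0 < σ) (hσl : σ < lam + 1 / 2)
    (ht : 0 < t) (hx : 0 < x) (hy : 0 < y) (hxy : x ≠ y) :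
    poissonProfile lam x t y ≤
      (t ^ 2) ^ (-(1 / 2 + σ)) * angularKernel lam (lam + 1 / 2 - σ) x y := by
  have hfin := isFiniteMeasure_angularMeasure hlam
  have hint := integrable_chordSq_rpow (q := lam + 1 / 2 - σ) hlam (by linarith) hx hy hxy
  rw [poissonProfile, angularKernel, mul_left_comm, ← integral_const_mul ((t ^ 2) ^ (-(1 / 2 + σ)))]
  have hpre : 0 ≤ (x * y) ^ lam := by positivity
  refine mul_le_mul_of_nonneg_left ?_ hpre
  have h0 : 0 < (x - y) ^ 2 := by have := sub_ne_zero.2 hxy; positivity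
  refine integral_mono_of_nonneg ?_ (hint.const_mul _) ?_
  · filter_upwards [ae_angularMeasure_mem_Icc lam] with u hu
    have hD : 0 < chordSq x y u := h0.trans_le (sq_sub_le_chordSq hx hy hu)
    simp only [Pi.zero_apply]
    positivity
  · filter_upwards [ae_angularMeasure_mem_Icc lam] with u hu
    have hD : 0 < chordSq x y u := h0.trans_le (sq_sub_le_chordSq hx hy hu)
    rw [show -(lam + 1) = -(1 / 2 + σ) + -(lam + 1 / 2 - σ) by ring, rpow_add (by positivity)]
    refine mul_le_mul ?_ ?_ (by positivity) (by positivity)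
    · exact rpow_le_rpow_of_nonpos (by positivity) (by linarith) (by linarith)
    · exact rpow_le_rpow_of_nonpos hD (by linarith [sq_nonneg t]) (by linarith)

theorem integrable_rpow_mul_chordSq_rpow {x y : ℝ} (hlam : 0 < lam) (hσ : 0 < σ)
    (hσl : σ < lam + 1 / 2) (hx : 0 < x) (hy : 0 < y) (hxy : x ≠ y) :
    Integrable (Function.uncurry fun t u : ℝ =>
      t ^ (2 * σ) * (t ^ 2 + chordSq x y u) ^ (-(lam + 1)))
      ((volume.restrict (Ioi 0)).prod (angularMeasure lam)) := by
  have hfin := isFiniteMeasure_angularMeasure hlam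
  have h0 : 0 < (x - y) ^ 2 := by have := sub_ne_zero.2 hxy; positivity
  have hi := (integrableOn_rpow_mul_sq_add_rpow hσ hσl h0).comp_fst (angularMeasure lam)
  refine hi.mono' (Measurable.aestronglyMeasurable ?_) ?_
  · simp only [Function.uncurry_def]
    fun_prop
  · have ha : ∀ᵐ z ∂(volume.restrict (Ioi (0 : ℝ))).prod (angularMeasure lam),
        z.1 ∈ Ioi (0 : ℝ) := Measure.quasiMeasurePreserving_fst.ae
          (ae_restrict_mem measurableSet_Ioi)
    have hb : ∀ᵐ z ∂(volume.restrict (Ioi (0 : ℝ))).prod (angularMeasure lam),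
        z.2 ∈ Icc (-1 : ℝ) 1 := Measure.quasiMeasurePreserving_snd.ae
          (ae_angularMeasure_mem_Icc lam)
    filter_upwards [ha, hb] with z hz1 hz2
    have hs : 0 < z.1 := hz1
    have hD := sq_sub_le_chordSq hx hy hz2
    have hD0 := h0.trans_le hD
    simp only [Function.uncurry_def]
    rw [norm_of_nonneg (by positivity)]
    refine mul_le_mul_of_nonneg_left ?_ (by positivity)
    exact rpow_le_rpow_of_nonpos (by positivity) (by linarith) (by linarith)

theorem integrableOn_rpow_mul_poissonProfile {x y : ℝ} (hlam : 0 < lam) (hσ : 0 < σ)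
    (hσl : σ < lam + 1 / 2) (hx : 0 < x) (hy : 0 < y) (hxy : x ≠ y) :
    IntegrableOn (fun t => t ^ (2 * σ) * poissonProfile lam x t y) (Ioi 0) := by
  have hfin := isFiniteMeasure_angularMeasure hlam
  have h := ((integrable_rpow_mul_chordSq_rpow hlam hσ hσl hx hy hxy).integral_prod_left).const_mul
    ((x * y) ^ lam)
  refine h.congr (Eventually.of_forall fun t => ?_)
  simp only [Function.uncurry_apply_pair, integral_const_mul, poissonProfile]
  ring

theorem integral_rpow_mul_poissonProfile {x y : ℝ} (hlam : 0 < lam) (hσ : 0 < σ)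
    (hσl : σ < lam + 1 / 2) (hx : 0 < x) (hy : 0 < y) (hxy : x ≠ y) :
    ∫ t in Ioi (0 : ℝ), t ^ (2 * σ) * poissonProfile lam x t y =
      1 / 2 * (∫ w in Ioi (0 : ℝ), w ^ (σ + 1 / 2 - 1) * (1 + w) ^ (-(lam + 1))) *
        angularKernel lam (lam + 1 / 2 - σ) x y := by
  have hfin := isFiniteMeasure_angularMeasure hlam
  have h0 : 0 < (x - y) ^ 2 := by have := sub_ne_zero.2 hxy; positivity
  calc _ = ∫ t in Ioi (0 : ℝ), (x * y) ^ lam * ∫ u, t ^ (2 * σ) *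
          (t ^ 2 + chordSq x y u) ^ (-(lam + 1)) ∂angularMeasure lam := by
        congr 1
        ext t
        rw [integral_const_mul, poissonProfile]
        ring
    _ = (x * y) ^ lam * ∫ u, (∫ t in Ioi (0 : ℝ), t ^ (2 * σ) *
          (t ^ 2 + chordSq x y u) ^ (-(lam + 1))) ∂angularMeasure lam := by
        rw [integral_const_mul, integral_integral_swap
          (integrable_rpow_mul_chordSq_rpow hlam hσ hσl hx hy hxy)]
    _ = (x * y) ^ lam * ∫ u, 1 / 2 *
          (∫ w in Ioi (0 : ℝ), w ^ (σ + 1 / 2 - 1) * (1 + w) ^ (-(lam + 1))) *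
          chordSq x y u ^ (-(lam + 1 / 2 - σ)) ∂angularMeasure lam := by
        congr 1
        refine integral_congr_ae ?_
        filter_upwards [ae_angularMeasure_mem_Icc lam] with u hu
        exact integral_rpow_mul_sq_add_rpow (h0.trans_le (sq_sub_le_chordSq hx hy hu))
    _ = _ := by
        rw [integral_const_mul, angularKernel]
        ring

theorem ae_restrict_Ioi_ne (x : ℝ) : ∀ᵐ y ∂(volume.restrict (Ioi (0 : ℝ))), 0 < y ∧ x ≠ y := by
  have h1 : ∀ᵐ y ∂(volume.restrict (Ioi (0 : ℝ))), y ≠ x :=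
    ae_restrict_of_ae (Measure.ae_ne volume x)
  filter_upwards [h1, ae_restrict_mem measurableSet_Ioi] with y hy hy0
  exact ⟨hy0, hy.symm⟩

/-- The Poisson integral representing the negative power is an integral operator whose kernel is
the angular kernel. -/
theorem exists_poisson_integral_eq_angularKernel (hlam : 0 < lam) (hσ : 0 < σ)
    (hσl : σ < lam + 1 / 2) :
    ∃ c : ℝ, 0 < c ∧ ∀ (x : ℝ) (f : ℝ → ℝ), 0 < x →
      AEStronglyMeasurable f (volume.restrict (Ioi 0)) →
      IntegrableOn (fun y => angularKernel lam (lam + 1 / 2 - σ) x y * f y) (Ioi 0) →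
      (∀ t, 0 < t → IntegrableOn (fun y => besselPoissonKernel lam t x y * f y) (Ioi 0)) ∧
      IntegrableOn (fun t => poissonSemigroup lam f t x * t ^ (2 * σ - 1)) (Ioi 0) ∧
      ∫ t in Ioi (0 : ℝ), poissonSemigroup lam f t x * t ^ (2 * σ - 1) =
        c * ∫ y in Ioi (0 : ℝ), angularKernel lam (lam + 1 / 2 - σ) x y * f y := by
  obtain ⟨c, hc, hP⟩ := besselPoissonKernel_eq hlam
  set M := ∫ w in Ioi (0 : ℝ), w ^ (σ + 1 / 2 - 1) * (1 + w) ^ (-(lam + 1)) with hM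
  have hM0 : 0 < M := integral_beta_prime_pos (by positivity) (by linarith)
  refine ⟨c * (1 / 2 * M), by positivity, fun x f hx hf hK => ?_⟩
  have hmeas := measurable_uncurry_poissonProfile hlam x
  have hPf : ∀ t, 0 < t → ∀ y ∈ Ioi (0 : ℝ), besselPoissonKernel lam t x y * f y =
      c * t * (poissonProfile lam x t y * f y) := by
    intro t ht y hy
    rw [hP t x y ht hx hy, poissonProfile]
    ring
  have hsemi : ∀ t ∈ Ioi (0 : ℝ), poissonSemigroup lam f t x * t ^ (2 * σ - 1) =
      c * ∫ y in Ioi (0 : ℝ), t ^ (2 * σ) * poissonProfile lam x t y * f y := by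
    intro t ht
    have ht : 0 < t := ht
    rw [poissonSemigroup, setIntegral_congr_fun measurableSet_Ioi (hPf t ht), integral_const_mul,
      show 2 * σ = (2 * σ - 1) + 1 by ring, rpow_add_one ht.ne']
    simp only [mul_assoc, integral_const_mul]
    rw [add_sub_cancel_right]
    ring
  have hnorm : ∀ y, 0 < y ∧ x ≠ y →
      ∫ t in Ioi (0 : ℝ), ‖t ^ (2 * σ) * poissonProfile lam x t y * f y‖ =
        1 / 2 * M * ‖angularKernel lam (lam + 1 / 2 - σ) x y * f y‖ := by
    intro y hy
    rw [norm_mul, norm_of_nonneg (angularKernel_nonneg hx hy.1), ← mul_assoc,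
      ← integral_rpow_mul_poissonProfile hlam hσ hσl hx hy.1 hy.2, ← integral_mul_const]
    refine setIntegral_congr_fun measurableSet_Ioi fun t ht => ?_
    have ht : 0 < t := ht
    rw [norm_mul, norm_of_nonneg (mul_nonneg (by positivity) (poissonProfile_nonneg hx hy.1))]
  have hprod : Integrable (Function.uncurry fun t y =>
      t ^ (2 * σ) * poissonProfile lam x t y * f y)
      ((volume.restrict (Ioi (0 : ℝ))).prod (volume.restrict (Ioi (0 : ℝ)))) := by
    have hm : AEStronglyMeasurable (Function.uncurry fun t y =>
        t ^ (2 * σ) * poissonProfile lam x t y * f y)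
        ((volume.restrict (Ioi (0 : ℝ))).prod (volume.restrict (Ioi (0 : ℝ)))) := by
      refine AEStronglyMeasurable.mul ?_ hf.comp_snd
      refine Measurable.aestronglyMeasurable (Measurable.mul (by fun_prop) ?_)
      exact hmeas
    rw [integrable_prod_iff' hm]
    constructor
    · filter_upwards [ae_restrict_Ioi_ne x] with y hy
      exact (integrableOn_rpow_mul_poissonProfile hlam hσ hσl hx hy.1 hy.2).mul_const (f y)
    · refine (hK.norm.const_mul (1 / 2 * M)).congr ?_
      filter_upwards [ae_restrict_Ioi_ne x] with y hy
      exact (hnorm y hy).symm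
  refine ⟨fun t ht => ?_, ?_, ?_⟩
  · refine IntegrableOn.congr_fun ?_ (fun y hy => (hPf t ht y hy).symm) measurableSet_Ioi
    refine Integrable.const_mul ?_ _
    refine (hK.norm.const_mul ((t ^ 2) ^ (-(1 / 2 + σ)))).mono' ?_ ?_
    · exact (hmeas.comp measurable_prodMk_left).aestronglyMeasurable.mul hf
    · filter_upwards [ae_restrict_Ioi_ne x] with y hy
      rw [norm_mul, norm_mul, ← mul_assoc, norm_of_nonneg (poissonProfile_nonneg hx hy.1),
        norm_of_nonneg (angularKernel_nonneg hx hy.1)]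
      gcongr
      exact poissonProfile_le hlam hσ hσl ht hx hy.1 hy.2
  · exact IntegrableOn.congr_fun (hprod.integral_prod_left.const_mul c)
      (fun t ht => (hsemi t ht).symm) measurableSet_Ioi
  · rw [setIntegral_congr_fun measurableSet_Ioi hsemi, integral_const_mul,
      integral_integral_swap hprod, mul_assoc]
    congr 1
    rw [← integral_const_mul (1 / 2 * M)]
    refine integral_congr_ae ?_
    filter_upwards [ae_restrict_Ioi_ne x] with y hy
    rw [integral_mul_const, integral_rpow_mul_poissonProfile hlam hσ hσl hx hy.1 hy.2, mul_assoc]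

end PoissonReduction

theorem integrable_comp_abs {g : ℝ → ℝ} (hg : IntegrableOn g (Ioi 0)) :
    Integrable fun y => g |y| := by
  have hIoi : IntegrableOn (fun y => g |y|) (Ioi 0) :=
    hg.congr_fun (fun y hy => by rw [abs_of_pos (mem_Ioi.1 hy)]) measurableSet_Ioi
  have hIic : IntegrableOn (fun y => g |y|) (Iic 0) := by
    have m : MeasurableEmbedding fun y : ℝ => -y := (Homeomorph.neg ℝ).measurableEmbedding
    rw [← Measure.map_neg_eq_self (volume : Measure ℝ), m.integrableOn_map_iff]
    simpa [Function.comp_def] using Iff.mpr integrableOn_Ici_iff_integrableOn_Ioi hIoi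
  rw [← integrableOn_univ, ← Iic_union_Ioi (a := (0 : ℝ))]
  exact hIic.union hIoi

theorem integrable_comp_abs_sub {g : ℝ → ℝ} (hg : IntegrableOn g (Ioi 0)) (x : ℝ) :
    Integrable fun y => g |y - x| :=
  (integrable_comp_abs hg).comp_sub_right x

theorem integral_comp_abs_sub (g : ℝ → ℝ) (x : ℝ) :
    ∫ y, g |y - x| = 2 * ∫ s in Ioi (0 : ℝ), g s := by
  rw [integral_sub_right_eq_self (fun y => g |y|) x, integral_comp_abs]

theorem integrableOn_abs_sub_lt_rpow {γ r : ℝ} (hγ : -1 < γ) (hr : 0 < r) (x : ℝ) :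
    IntegrableOn (fun y => |y - x| ^ γ) {y | |y - x| < r} := by
  have hm : MeasurableSet {y : ℝ | |y - x| < r} := measurableSet_lt (by fun_prop) (by fun_prop)
  rw [← integrable_indicator_iff hm]
  refine integrable_comp_abs_sub (g := (Iio r).indicator fun s => s ^ γ) ?_ x
  rw [IntegrableOn, integrable_indicator_iff measurableSet_Iio, IntegrableOn,
    Measure.restrict_restrict measurableSet_Iio, inter_comm, Ioi_inter_Iio]
  exact (intervalIntegral.integrableOn_Ioo_rpow_iff hr).2 hγ

theorem integral_abs_sub_lt_rpow {γ r : ℝ} (hγ : -1 < γ) (hr : 0 < r) (x : ℝ) :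
    ∫ y in {y | |y - x| < r}, |y - x| ^ γ = 2 / (γ + 1) * r ^ (γ + 1) := by
  have hm : MeasurableSet {y : ℝ | |y - x| < r} := measurableSet_lt (by fun_prop) (by fun_prop)
  rw [← integral_indicator hm]
  refine (integral_comp_abs_sub ((Iio r).indicator fun s => s ^ γ) x).trans ?_
  rw [setIntegral_indicator measurableSet_Iio, Ioi_inter_Iio, ← integral_Ioc_eq_integral_Ioo,
    ← intervalIntegral.integral_of_le hr.le, integral_rpow (Or.inl hγ),
    zero_rpow (by linarith)]
  ring

theorem integrableOn_lt_abs_sub_rpow {γ r : ℝ} (hγ : γ < -1) (hr : 0 < r) (x : ℝ) :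
    IntegrableOn (fun y => |y - x| ^ γ) {y | r < |y - x|} := by
  have hm : MeasurableSet {y : ℝ | r < |y - x|} := measurableSet_lt (by fun_prop) (by fun_prop)
  rw [← integrable_indicator_iff hm]
  refine integrable_comp_abs_sub (g := (Ioi r).indicator fun s => s ^ γ) ?_ x
  rw [IntegrableOn, integrable_indicator_iff measurableSet_Ioi, IntegrableOn,
    Measure.restrict_restrict measurableSet_Ioi, inter_eq_left.2 (Ioi_subset_Ioi hr.le)]
  exact integrableOn_Ioi_rpow_of_lt hγ hr

theorem integral_lt_abs_sub_rpow {γ r : ℝ} (hγ : γ < -1) (hr : 0 < r) (x : ℝ) :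
    ∫ y in {y | r < |y - x|}, |y - x| ^ γ = 2 / -(γ + 1) * r ^ (γ + 1) := by
  have hm : MeasurableSet {y : ℝ | r < |y - x|} := measurableSet_lt (by fun_prop) (by fun_prop)
  rw [← integral_indicator hm]
  refine (integral_comp_abs_sub ((Ioi r).indicator fun s => s ^ γ) x).trans ?_
  rw [setIntegral_indicator measurableSet_Ioi, inter_eq_right.2 (Ioi_subset_Ioi hr.le),
    integral_Ioi_rpow_of_lt hγ hr, div_neg]
  ring

section Kernel

variable {lam q : ℝ}

theorem angularKernel_le_abs_sub_rpow (hlam : 0 < lam) (hq : lam < q) :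
    ∃ C : ℝ, 0 < C ∧ ∀ x y : ℝ, 0 < x → 0 < y → x ≠ y →
      angularKernel lam q x y ≤ C * |y - x| ^ (2 * lam - 2 * q) := by
  obtain ⟨C, hC, h⟩ := integral_angularMeasure_add_mul_rpow_le hlam hq
  refine ⟨C * 2 ^ (-lam), by positivity, fun x y hx hy hxy => ?_⟩
  have h0 : 0 < |y - x| := abs_pos.2 (sub_ne_zero.2 hxy.symm)
  have h1 := h (|y - x| ^ 2) (2 * (x * y)) (by positivity) (by positivity)
  have e : ∀ u, |y - x| ^ 2 + 2 * (x * y) * (1 - u) = chordSq x y u := fun u => by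
    rw [chordSq_eq_sq_sub_add, sq_abs]
    ring
  simp only [e] at h1
  have hxy0 : 0 < x * y := by positivity
  calc angularKernel lam q x y
      ≤ (x * y) ^ lam * (C * ((2 * (x * y)) ^ (-lam) * (|y - x| ^ 2) ^ (lam - q))) :=
        mul_le_mul_of_nonneg_left h1 (by positivity)
    _ = C * 2 ^ (-lam) * |y - x| ^ (2 * lam - 2 * q) * ((x * y) ^ lam * (x * y) ^ (-lam)) := by
        rw [mul_rpow zero_le_two hxy0.le, ← rpow_natCast_mul h0.le]
        push_cast
        rw [mul_sub]
        ring
    _ = _ := by rw [← rpow_add hxy0, add_neg_cancel, rpow_zero, mul_one]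

theorem angularKernel_one_le_rpow (hlam : 0 < lam) (hq : 0 < q) {r : ℝ} (hr : 2 < r) :
    angularKernel lam q 1 r ≤
      (angularMeasure lam).real univ * 4 ^ q * r ^ (lam - 2 * q) := by
  have hfin := isFiniteMeasure_angularMeasure hlam
  have hr0 : 0 < r := by linarith
  have h1 : ∫ u, chordSq 1 r u ^ (-q) ∂angularMeasure lam ≤
      ∫ _, (r ^ 2 / 4) ^ (-q) ∂angularMeasure lam := by
    refine integral_mono_ae (integrable_chordSq_rpow hlam hq one_pos hr0 (by linarith))
      (integrable_const _) ?_
    filter_upwards [ae_angularMeasure_mem_Icc lam] with u hu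
    refine rpow_le_rpow_of_nonpos (by positivity) ?_ (by linarith)
    refine le_trans ?_ (sq_sub_le_chordSq one_pos hr0 hu)
    nlinarith
  rw [integral_const, smul_eq_mul] at h1
  rw [angularKernel, one_mul]
  refine (mul_le_mul_of_nonneg_left h1 (by positivity)).trans_eq ?_
  rw [div_rpow (by positivity) (by norm_num), rpow_neg (x := 4) (by norm_num),
    ← rpow_natCast_mul hr0.le, sub_eq_add_neg, rpow_add hr0]
  push_cast
  field_simp

theorem angularKernel_mul_right {x r : ℝ} (hx : 0 < x) (hr : 0 < r) :
    angularKernel lam q x (x * r) = x ^ (2 * lam - 2 * q) * angularKernel lam q 1 r := by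
  have h1 : ∫ u, chordSq x (x * r) u ^ (-q) ∂angularMeasure lam =
      ∫ u, (x ^ 2) ^ (-q) * chordSq 1 r u ^ (-q) ∂angularMeasure lam := by
    refine integral_congr_ae ?_
    filter_upwards [ae_angularMeasure_mem_Icc lam] with u hu
    rw [← mul_rpow (by positivity) ((sq_nonneg _).trans (sq_sub_le_chordSq one_pos hr hu))]
    congr 1
    unfold chordSq
    ring
  rw [angularKernel, angularKernel, h1, integral_const_mul, one_mul, ← mul_assoc x,
    mul_rpow (by positivity) hr.le, ← pow_two, ← rpow_natCast_mul hx.le, ← rpow_natCast_mul hx.le,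
    sub_eq_add_neg, rpow_add hx]
  push_cast
  ring_nf

theorem integrableOn_angularKernel_one_mul_rpow {a : ℝ} (hlam : 0 < lam) (hq : lam < q)
    (hq' : q < lam + 1 / 2) (ha : 0 ≤ a) (haq : lam - 2 * q + a < -1) :
    IntegrableOn (fun r => angularKernel lam q 1 r * r ^ a) (Ioi 0) := by
  obtain ⟨C, hC, h⟩ := angularKernel_le_abs_sub_rpow hlam hq
  have hm : Measurable fun r => angularKernel lam q 1 r * r ^ a :=
    (measurable_angularKernel hlam q 1).mul (by fun_prop)
  rw [← Ioc_union_Ioi_eq_Ioi zero_le_two]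
  refine IntegrableOn.union ?_ ?_
  · have hi : IntegrableOn (fun y : ℝ => C * 2 ^ a * |y - 1| ^ (2 * lam - 2 * q)) (Ioc 0 2) :=
      ((integrableOn_abs_sub_lt_rpow (by linarith) two_pos 1).mono_set fun y hy =>
        abs_lt.2 (show -2 < y - 1 ∧ y - 1 < 2 from
          ⟨by linarith [hy.1], by linarith [hy.2]⟩)).const_mul _
    refine hi.mono' hm.aestronglyMeasurable ?_
    have hne : ∀ᵐ y ∂(volume.restrict (Ioc (0 : ℝ) 2)), y ≠ 1 :=
      ae_restrict_of_ae (Measure.ae_ne volume 1)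
    filter_upwards [hne, ae_restrict_mem measurableSet_Ioc] with y hy hy0
    have hp := hy0.1
    rw [norm_of_nonneg (mul_nonneg (angularKernel_nonneg one_pos hp) (by positivity)),
      mul_right_comm]
    have := h 1 y one_pos hp hy.symm
    have := rpow_le_rpow hp.le hy0.2 ha
    gcongr
  · have hi : IntegrableOn (fun r : ℝ => (angularMeasure lam).real univ * 4 ^ q *
        r ^ (lam - 2 * q + a)) (Ioi 2) :=
      (integrableOn_Ioi_rpow_of_lt haq two_pos).const_mul _
    refine hi.mono' hm.aestronglyMeasurable ?_
    refine ae_restrict_of_forall_mem measurableSet_Ioi fun r hr => ?_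
    have hr : 2 < r := hr
    have hp : 0 < r := by linarith
    rw [norm_of_nonneg (mul_nonneg (angularKernel_nonneg one_pos hp) (by positivity)),
      rpow_add hp, ← mul_assoc]
    have := angularKernel_one_le_rpow hlam (hlam.trans hq) hr
    gcongr

theorem angularKernel_mul_right_mul_rpow {a x r : ℝ} (hx : 0 < x) (hr : 0 < r) :
    angularKernel lam q x (x * r) * (x * r) ^ a =
      x ^ (2 * lam - 2 * q + a) * (angularKernel lam q 1 r * r ^ a) := by
  rw [angularKernel_mul_right hx hr, mul_rpow hx.le hr.le, rpow_add hx]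
  ring

theorem integrableOn_angularKernel_mul_rpow {a x : ℝ} (hlam : 0 < lam) (hq : lam < q)
    (hq' : q < lam + 1 / 2) (ha : 0 ≤ a) (haq : lam - 2 * q + a < -1) (hx : 0 < x) :
    IntegrableOn (fun y => angularKernel lam q x y * y ^ a) (Ioi 0) := by
  have h := (integrableOn_Ioi_comp_mul_left_iff
    (fun y => angularKernel lam q x y * y ^ a) 0 hx).1
  rw [mul_zero] at h
  refine h (IntegrableOn.congr_fun ?_
    (fun r hr => (angularKernel_mul_right_mul_rpow hx hr).symm) measurableSet_Ioi)
  exact (integrableOn_angularKernel_one_mul_rpow hlam hq hq' ha haq).const_mul _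

theorem integral_angularKernel_mul_rpow {a x : ℝ} (hx : 0 < x) :
    ∫ y in Ioi (0 : ℝ), angularKernel lam q x y * y ^ a =
      (∫ r in Ioi (0 : ℝ), angularKernel lam q 1 r * r ^ a) * x ^ (2 * lam - 2 * q + a + 1) := by
  have h := integral_comp_mul_left_Ioi (fun y => angularKernel lam q x y * y ^ a) 0 hx
  rw [mul_zero, smul_eq_mul, setIntegral_congr_fun measurableSet_Ioi
    (fun r hr => angularKernel_mul_right_mul_rpow hx hr), integral_const_mul] at h
  rw [rpow_add_one hx.ne', eq_inv_mul_iff_mul_eq₀ hx.ne'] at *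
  linarith

end Kernel

theorem chordSq_le_four_mul {x₁ ξ y u : ℝ} (hx₁ : 0 < x₁) (hy : 0 < y)
    (hu : u ∈ Icc (-1 : ℝ) 1) (h : 2 * |x₁ - ξ| ≤ |y - x₁|) :
    chordSq x₁ y u ≤ 4 * chordSq ξ y u := by
  have h1 : 4 * (x₁ - ξ) ^ 2 ≤ chordSq x₁ y u := by
    refine le_trans ?_ (sq_sub_le_chordSq hx₁ hy hu)
    rw [← sq_abs (x₁ - y), abs_sub_comm x₁ y, ← sq_abs (x₁ - ξ)]
    nlinarith [abs_nonneg (x₁ - ξ)]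
  have h2 : 0 ≤ y ^ 2 * (1 - u ^ 2) := mul_nonneg (sq_nonneg y) (by nlinarith [hu.1, hu.2])
  rw [chordSq_eq_sq_add] at h1 ⊢
  rw [chordSq_eq_sq_add]
  nlinarith [sq_nonneg (x₁ - 2 * ξ + y * u)]

theorem abs_rpow_mul_chordSq_rpow_sub_le {lam q x₁ x₂ y u : ℝ} (hlam : 0 < lam) (hq : 0 < q)
    (hx₂ : 0 < x₂) (h12 : x₂ < x₁) (h2 : x₁ < 2 * x₂) (hy : 0 < y) (hu : u ∈ Icc (-1 : ℝ) 1)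
    (h : 2 * (x₁ - x₂) ≤ |y - x₁|) :
    |x₁ ^ lam * chordSq x₁ y u ^ (-q) - x₂ ^ lam * chordSq x₂ y u ^ (-q)| ≤
      (2 * lam * 4 ^ q * (x₁ ^ lam / x₁ * chordSq x₁ y u ^ (-q)) +
        2 * q * 4 ^ (q + 1 / 2) * (x₁ ^ lam * chordSq x₁ y u ^ (-(q + 1 / 2)))) * (x₁ - x₂) := by
  have hx₁ : 0 < x₁ := hx₂.trans h12
  have hD1 : 0 < chordSq x₁ y u := by
    refine lt_of_lt_of_le ?_ (sq_sub_le_chordSq hx₁ hy hu)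
    have : 0 < |y - x₁| := by linarith
    rw [← sq_abs, abs_sub_comm]
    positivity
  have hmem : ∀ ξ ∈ Icc x₂ x₁, 0 < ξ ∧ chordSq x₁ y u / 4 ≤ chordSq ξ y u := by
    intro ξ hξ
    refine ⟨hx₂.trans_le hξ.1, ?_⟩
    have := chordSq_le_four_mul (ξ := ξ) hx₁ hy hu (by
      rw [abs_of_nonneg (by linarith [hξ.2])]
      linarith [hξ.1])
    linarith
  have hderiv : ∀ ξ ∈ Icc x₂ x₁, HasDerivWithinAt (fun ξ => ξ ^ lam * chordSq ξ y u ^ (-q))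
      (lam * ξ ^ (lam - 1) * chordSq ξ y u ^ (-q) +
        ξ ^ lam * ((2 * (ξ - y * u)) * (-q) * chordSq ξ y u ^ (-q - 1))) (Icc x₂ x₁) ξ := by
    intro ξ hξ
    obtain ⟨h0, hD⟩ := hmem ξ hξ
    have hc : HasDerivAt (fun ξ => chordSq ξ y u) (2 * (ξ - y * u)) ξ := by
      rw [show (fun ξ => chordSq ξ y u) = fun ξ => (ξ - y * u) ^ 2 + y ^ 2 * (1 - u ^ 2) from
        funext fun ξ => chordSq_eq_sq_add ξ y u]
      simpa using ((((hasDerivAt_id' ξ).sub_const (y * u)).fun_pow 2).add_const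
        (y ^ 2 * (1 - u ^ 2)))
    have h3 := (hasDerivAt_rpow_const (p := lam) (Or.inl h0.ne')).mul
      (hc.rpow_const (p := -q) (Or.inl (by linarith)))
    exact h3.hasDerivWithinAt
  have hbound : ∀ ξ ∈ Icc x₂ x₁, ‖lam * ξ ^ (lam - 1) * chordSq ξ y u ^ (-q) +
        ξ ^ lam * ((2 * (ξ - y * u)) * (-q) * chordSq ξ y u ^ (-q - 1))‖ ≤
      2 * lam * 4 ^ q * (x₁ ^ lam / x₁ * chordSq x₁ y u ^ (-q)) +
        2 * q * 4 ^ (q + 1 / 2) * (x₁ ^ lam * chordSq x₁ y u ^ (-(q + 1 / 2))) := by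
    intro ξ hξ
    obtain ⟨h0, hD⟩ := hmem ξ hξ
    have hD0 : 0 < chordSq ξ y u := by linarith
    have hcomp : ∀ a : ℝ, 0 < a → chordSq ξ y u ^ (-a) ≤ 4 ^ a * chordSq x₁ y u ^ (-a) := by
      intro a ha
      refine (rpow_le_rpow_of_nonpos (by positivity) hD (by linarith)).trans_eq ?_
      rw [div_rpow hD1.le (by norm_num), rpow_neg (x := 4) (by norm_num), div_inv_eq_mul, mul_comm]
    have hpow : ξ ^ lam ≤ x₁ ^ lam := rpow_le_rpow h0.le hξ.2 hlam.le
    have hdiv : ξ ^ (lam - 1) ≤ 2 * (x₁ ^ lam / x₁) := by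
      rw [rpow_sub_one h0.ne', div_le_iff₀ h0]
      calc ξ ^ lam ≤ x₁ ^ lam / x₁ * x₁ := by rwa [div_mul_cancel₀ _ hx₁.ne']
        _ ≤ x₁ ^ lam / x₁ * (2 * ξ) := by
            gcongr
            linarith [hξ.1]
        _ = _ := by ring
    have hroot : |ξ - y * u| ≤ chordSq ξ y u ^ (1 / 2 : ℝ) := by
      rw [← sqrt_eq_rpow]
      refine abs_le_sqrt ?_
      rw [chordSq_eq_sq_add]
      have : 0 ≤ y ^ 2 * (1 - u ^ 2) := mul_nonneg (sq_nonneg y) (by nlinarith [hu.1, hu.2])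
      linarith
    refine (norm_add_le _ _).trans (add_le_add ?_ ?_)
    · rw [norm_of_nonneg (by positivity)]
      calc lam * ξ ^ (lam - 1) * chordSq ξ y u ^ (-q)
          ≤ lam * (2 * (x₁ ^ lam / x₁)) * (4 ^ q * chordSq x₁ y u ^ (-q)) := by
            have := hcomp q hq
            gcongr
        _ = _ := by ring
    · rw [norm_mul, norm_mul, norm_mul, norm_mul, norm_of_nonneg (rpow_nonneg h0.le _),
        norm_of_nonneg (rpow_nonneg hD0.le _), norm_neg, norm_of_nonneg hq.le, Real.norm_ofNat,
        Real.norm_eq_abs]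
      calc ξ ^ lam * (2 * |ξ - y * u| * q * chordSq ξ y u ^ (-q - 1))
          ≤ x₁ ^ lam * (2 * chordSq ξ y u ^ (1 / 2 : ℝ) * q * chordSq ξ y u ^ (-q - 1)) := by
            gcongr
        _ = 2 * q * x₁ ^ lam * chordSq ξ y u ^ (-(q + 1 / 2)) := by
            rw [show -(q + 1 / 2) = 1 / 2 + (-q - 1) by ring, rpow_add hD0]
            ring
        _ ≤ 2 * q * x₁ ^ lam * (4 ^ (q + 1 / 2) * chordSq x₁ y u ^ (-(q + 1 / 2))) := by
            have := hcomp (q + 1 / 2) (by positivity)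
            gcongr
        _ = _ := by ring
  have := (convex_Icc x₂ x₁).norm_image_sub_le_of_norm_hasDerivWithin_le hderiv hbound
    (left_mem_Icc.2 h12.le) (right_mem_Icc.2 h12.le)
  rwa [Real.norm_eq_abs, norm_of_nonneg (sub_nonneg.2 h12.le)] at this

theorem abs_angularKernel_sub_le {lam q : ℝ} (hlam : 0 < lam) (hq : 0 < q) :
    ∃ C : ℝ, 0 < C ∧ ∀ x₁ x₂ y : ℝ, 0 < x₂ → x₂ < x₁ → x₁ < 2 * x₂ → 0 < y →
      2 * (x₁ - x₂) ≤ |y - x₁| →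
      |angularKernel lam q x₁ y - angularKernel lam q x₂ y| ≤
        C * (x₁ - x₂) * (angularKernel lam q x₁ y / x₁ + angularKernel lam (q + 1 / 2) x₁ y) := by
  refine ⟨2 * lam * 4 ^ q + 2 * q * 4 ^ (q + 1 / 2), by positivity,
    fun x₁ x₂ y hx₂ h12 h2 hy h => ?_⟩
  have hx₁ : 0 < x₁ := hx₂.trans h12
  have hne1 : x₁ ≠ y := by
    rintro rfl
    rw [sub_self, abs_zero] at h
    linarith
  have hne2 : x₂ ≠ y := by
    rintro rfl
    rw [abs_sub_comm, abs_of_pos (by linarith)] at h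
    linarith
  have i1 := (integrable_chordSq_rpow hlam hq hx₁ hy hne1).const_mul (x₁ ^ lam)
  have i2 := (integrable_chordSq_rpow hlam hq hx₂ hy hne2).const_mul (x₂ ^ lam)
  have j1 := (integrable_chordSq_rpow hlam hq hx₁ hy hne1).const_mul (x₁ ^ lam / x₁)
  have j2 := (integrable_chordSq_rpow hlam (q := q + 1 / 2) (by positivity) hx₁ hy hne1).const_mul
    (x₁ ^ lam)
  have key : |∫ u, (x₁ ^ lam * chordSq x₁ y u ^ (-q) - x₂ ^ lam * chordSq x₂ y u ^ (-q))
        ∂angularMeasure lam| ≤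
      ∫ u, (2 * lam * 4 ^ q * (x₁ ^ lam / x₁ * chordSq x₁ y u ^ (-q)) +
        2 * q * 4 ^ (q + 1 / 2) * (x₁ ^ lam * chordSq x₁ y u ^ (-(q + 1 / 2)))) * (x₁ - x₂)
        ∂angularMeasure lam := by
    rw [← Real.norm_eq_abs]
    refine norm_integral_le_of_norm_le
      (((j1.const_mul _).add (j2.const_mul _)).mul_const (x₁ - x₂)) ?_
    filter_upwards [ae_angularMeasure_mem_Icc lam] with u hu
    exact abs_rpow_mul_chordSq_rpow_sub_le hlam hq hx₂ h12 h2 hy hu h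
  rw [integral_sub i1 i2, integral_mul_const, integral_add (j1.const_mul _) (j2.const_mul _)] at key
  simp only [integral_const_mul] at key
  have hK := angularKernel_nonneg (lam := lam) (q := q) hx₁ hy
  have hJ := angularKernel_nonneg (lam := lam) (q := q + 1 / 2) hx₁ hy
  have hsub : 0 < x₁ - x₂ := by linarith
  calc |angularKernel lam q x₁ y - angularKernel lam q x₂ y|
      = y ^ lam * |x₁ ^ lam * (∫ u, chordSq x₁ y u ^ (-q) ∂angularMeasure lam) -
          x₂ ^ lam * ∫ u, chordSq x₂ y u ^ (-q) ∂angularMeasure lam| := by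
        rw [← abs_of_nonneg (rpow_nonneg hy.le lam), ← abs_mul,
          angularKernel, angularKernel, mul_rpow hx₁.le hy.le, mul_rpow hx₂.le hy.le]
        congr 1
        ring
    _ ≤ _ := mul_le_mul_of_nonneg_left key (by positivity)
    _ = (x₁ - x₂) * (2 * lam * 4 ^ q * (angularKernel lam q x₁ y / x₁) +
          2 * q * 4 ^ (q + 1 / 2) * angularKernel lam (q + 1 / 2) x₁ y) := by
        rw [angularKernel, angularKernel, mul_rpow hx₁.le hy.le]
        ring
    _ ≤ (x₁ - x₂) * ((2 * lam * 4 ^ q + 2 * q * 4 ^ (q + 1 / 2)) * (angularKernel lam q x₁ y / x₁) +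
          (2 * lam * 4 ^ q + 2 * q * 4 ^ (q + 1 / 2)) * angularKernel lam (q + 1 / 2) x₁ y) := by
        gcongr
        · linarith [show 0 ≤ 2 * q * 4 ^ (q + 1 / 2) by positivity]
        · linarith [show 0 ≤ 2 * lam * 4 ^ q by positivity]
    _ = _ := by ring

theorem mul_rpow_sub_one_le_rpow {h x b : ℝ} (hh : 0 < h) (hx : h ≤ x) (hb : b ≤ 1) :
    h * x ^ (b - 1) ≤ h ^ b := by
  calc h * x ^ (b - 1) ≤ h * h ^ (b - 1) := by
        have := rpow_le_rpow_of_nonpos hh hx (sub_nonpos.2 hb)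
        gcongr
    _ = h ^ b := by rw [rpow_sub_one hh.ne', mul_div_cancel₀ _ hh.ne']

theorem abs_rpow_sub_rpow_le {x₁ x₂ s : ℝ} (hx₂ : 0 < x₂) (h : x₂ < x₁) (hs0 : 0 ≤ s)
    (hs1 : s ≤ 1) : |x₁ ^ s - x₂ ^ s| ≤ (x₁ - x₂) * x₁ ^ (s - 1) := by
  have hx₁ : 0 < x₁ := hx₂.trans h
  rw [abs_of_nonneg (sub_nonneg.2 (rpow_le_rpow hx₂.le h.le hs0)), rpow_sub_one hx₁.ne']
  have h1 : x₂ / x₁ ≤ (x₂ / x₁) ^ s :=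
    self_le_rpow_of_le_one (by positivity) ((div_le_one hx₁).2 h.le) hs1
  rw [div_rpow hx₂.le hx₁.le, le_div_iff₀ (by positivity)] at h1
  have h2 : (x₁ - x₂) * (x₁ ^ s / x₁) = x₁ ^ s - x₂ / x₁ * x₁ ^ s := by field_simp
  linarith

section Estimates

variable {lam q α : ℝ} {f : ℝ → ℝ} {H G : ℝ}

theorem integrableOn_angularKernel_mul (hlam : 0 < lam) (hq : lam < q) (hq' : q < lam + 1 / 2)
    (hα : 0 ≤ α) (hαq : lam - 2 * q + α < -1)
    (hf : AEStronglyMeasurable f (volume.restrict (Ioi 0)))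
    (hG : ∀ x, 0 < x → |f x| ≤ G * x ^ α) {x : ℝ} (hx : 0 < x) :
    IntegrableOn (fun y => angularKernel lam q x y * f y) (Ioi 0) := by
  refine ((integrableOn_angularKernel_mul_rpow hlam hq hq' hα hαq hx).const_mul G).mono'
    ((measurable_angularKernel hlam q x).aestronglyMeasurable.mul hf) ?_
  refine ae_restrict_of_forall_mem measurableSet_Ioi fun y hy => ?_
  have hy : 0 < y := hy
  rw [norm_mul, norm_of_nonneg (angularKernel_nonneg hx hy), mul_left_comm]
  exact mul_le_mul_of_nonneg_left (hG y hy) (angularKernel_nonneg hx hy)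

theorem abs_integral_angularKernel_mul_le (hlam : 0 < lam) (hq : lam < q) (hq' : q < lam + 1 / 2)
    (hα : 0 ≤ α) (hαq : lam - 2 * q + α < -1) (hG : ∀ x, 0 < x → |f x| ≤ G * x ^ α) {x : ℝ}
    (hx : 0 < x) :
    |∫ y in Ioi (0 : ℝ), angularKernel lam q x y * f y| ≤
      (∫ r in Ioi (0 : ℝ), angularKernel lam q 1 r * r ^ α) * G *
        x ^ (2 * lam - 2 * q + α + 1) := by
  rw [mul_right_comm, ← integral_angularKernel_mul_rpow hx, ← Real.norm_eq_abs,
    ← integral_mul_const]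
  refine norm_integral_le_of_norm_le
    ((integrableOn_angularKernel_mul_rpow hlam hq hq' hα hαq hx).mul_const G) ?_
  refine ae_restrict_of_forall_mem measurableSet_Ioi fun y hy => ?_
  have hy : 0 < y := hy
  rw [norm_mul, norm_of_nonneg (angularKernel_nonneg hx hy), mul_assoc, mul_comm _ G]
  exact mul_le_mul_of_nonneg_left (hG y hy) (angularKernel_nonneg hx hy)

theorem integral_angularKernel_mul_rpow_nonneg (a : ℝ) {x : ℝ} (hx : 0 < x) :
    0 ≤ ∫ r in Ioi (0 : ℝ), angularKernel lam q x r * r ^ a :=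
  setIntegral_nonneg measurableSet_Ioi fun _ hr =>
    mul_nonneg (angularKernel_nonneg hx hr) (rpow_nonneg (mem_Ioi.1 hr).le _)

/-- Hölder continuity, at scales small compared with the distance to the origin, of the integral
against the kernel difference. -/
theorem abs_integral_angularKernel_sub_mul_le (hlam : 0 < lam) (hq : lam < q)
    (hq' : q < lam + 1 / 2) (hα : 0 < α) (hαq : lam - 2 * q + α < -1)
    (hα1 : 2 * lam - 2 * q + α < 0) :
    ∃ C : ℝ, 0 < C ∧ ∀ (f : ℝ → ℝ) (H G : ℝ), 0 ≤ H → 0 ≤ G →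
      (∀ x y, 0 < x → 0 < y → |f x - f y| ≤ H * |x - y| ^ α) →
      (∀ x, 0 < x → |f x| ≤ G * x ^ α) → ∀ x₁ x₂, 0 < x₂ → x₂ < x₁ → x₁ < 2 * x₂ →
      |∫ y in Ioi (0 : ℝ), (angularKernel lam q x₁ y - angularKernel lam q x₂ y) * (f y - f x₁)| ≤
        C * (H + G) * (x₁ - x₂) ^ (2 * lam - 2 * q + α + 1) := by
  obtain ⟨C₁, hC₁, hK⟩ := angularKernel_le_abs_sub_rpow hlam hq
  obtain ⟨C₃, hC₃, hJ⟩ := angularKernel_le_abs_sub_rpow (q := q + 1 / 2) hlam (by linarith)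
  obtain ⟨C₂, hC₂, hdiff⟩ := abs_angularKernel_sub_le (q := q) hlam (hlam.trans hq)
  set γ := 2 * lam - 2 * q with hγ
  rw [show 2 * lam - 2 * (q + 1 / 2) = γ - 1 by ring] at hJ
  have hγ1 : -1 < γ := by linarith
  set M := ∫ r in Ioi (0 : ℝ), angularKernel lam q 1 r * r ^ α with hM
  set M₀ := ∫ r in Ioi (0 : ℝ), angularKernel lam q 1 r * r ^ (0 : ℝ) with hM₀
  have hMn : 0 ≤ M := integral_angularKernel_mul_rpow_nonneg α one_pos
  have hM₀n : 0 ≤ M₀ := integral_angularKernel_mul_rpow_nonneg 0 one_pos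
  set N := 2 / (γ + 1) with hN
  have hNn : 0 < N := div_pos two_pos (by linarith)
  set R := 2 / -(γ + α) with hR
  have hRn : 0 < R := div_pos two_pos (by linarith)
  refine ⟨C₁ * 3 ^ (γ + α + 1) * (2 * N) + C₂ * (M + M₀ + C₃ * R), by positivity,
    fun f H G hH hG hfH hfG x₁ x₂ hx₂ h12 h2 => ?_⟩
  have hx₁ : 0 < x₁ := hx₂.trans h12
  set h := x₁ - x₂ with hh
  have hh0 : 0 < h := by linarith
  have hhx : h ≤ x₁ := by linarith
  set S₁ := {y : ℝ | |y - x₁| < 3 * h} with hS₁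
  set S₂ := {y : ℝ | |y - x₂| < 3 * h} with hS₂
  set S₃ := {y : ℝ | h < |y - x₁|} with hS₃
  have mS₁ : MeasurableSet S₁ := measurableSet_lt (by fun_prop) (by fun_prop)
  have mS₂ : MeasurableSet S₂ := measurableSet_lt (by fun_prop) (by fun_prop)
  have mS₃ : MeasurableSet S₃ := measurableSet_lt (by fun_prop) (by fun_prop)
  set g₁ := S₁.indicator fun y => |y - x₁| ^ γ with hg₁
  set g₂ := S₂.indicator fun y => |y - x₂| ^ γ with hg₂
  set g₃ := S₃.indicator fun y => |y - x₁| ^ (γ - 1 + α) with hg₃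
  have ig₁ : Integrable g₁ :=
    (integrable_indicator_iff mS₁).2 (integrableOn_abs_sub_lt_rpow hγ1 (by positivity) x₁)
  have ig₂ : Integrable g₂ :=
    (integrable_indicator_iff mS₂).2 (integrableOn_abs_sub_lt_rpow hγ1 (by positivity) x₂)
  have ig₃ : Integrable g₃ :=
    (integrable_indicator_iff mS₃).2 (integrableOn_lt_abs_sub_rpow (by linarith) hh0 x₁)
  have n₁ : ∀ y, 0 ≤ g₁ y := indicator_nonneg fun y _ => by positivity
  have n₂ : ∀ y, 0 ≤ g₂ y := indicator_nonneg fun y _ => by positivity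
  have n₃ : ∀ y, 0 ≤ g₃ y := indicator_nonneg fun y _ => by positivity
  have e₁ : ∫ y in Ioi (0 : ℝ), g₁ y ≤ N * (3 * h) ^ (γ + 1) := by
    refine (setIntegral_le_integral ig₁ (Eventually.of_forall n₁)).trans_eq ?_
    rw [hg₁, integral_indicator mS₁, integral_abs_sub_lt_rpow hγ1 (by positivity)]
  have e₂ : ∫ y in Ioi (0 : ℝ), g₂ y ≤ N * (3 * h) ^ (γ + 1) := by
    refine (setIntegral_le_integral ig₂ (Eventually.of_forall n₂)).trans_eq ?_
    rw [hg₂, integral_indicator mS₂, integral_abs_sub_lt_rpow hγ1 (by positivity)]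
  have e₃ : ∫ y in Ioi (0 : ℝ), g₃ y ≤ R * h ^ (γ + α) := by
    refine (setIntegral_le_integral ig₃ (Eventually.of_forall n₃)).trans_eq ?_
    rw [hg₃, integral_indicator mS₃, integral_lt_abs_sub_rpow (by linarith) hh0,
      show γ - 1 + α + 1 = γ + α by ring]
  have iα := integrableOn_angularKernel_mul_rpow hlam hq hq' hα.le hαq hx₁
  have i₀ := integrableOn_angularKernel_mul_rpow (a := 0) hlam hq hq' le_rfl (by linarith) hx₁
  have eα := integral_angularKernel_mul_rpow (lam := lam) (q := q) (a := α) hx₁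
  have e₀ := integral_angularKernel_mul_rpow (lam := lam) (q := q) (a := 0) hx₁
  have inear : IntegrableOn (fun y => C₁ * H * (3 * h) ^ α * (g₁ y + g₂ y)) (Ioi 0) :=
    (ig₁.integrableOn.add ig₂.integrableOn).const_mul _
  have ifar : IntegrableOn (fun y => C₂ * h * (G / x₁ * (angularKernel lam q x₁ y * y ^ α +
      x₁ ^ α * (angularKernel lam q x₁ y * y ^ (0 : ℝ))) + C₃ * H * g₃ y)) (Ioi 0) :=
    (((iα.add (i₀.const_mul _)).const_mul _).add (ig₃.integrableOn.const_mul _)).const_mul _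
  have hbound : ∀ᵐ y ∂volume.restrict (Ioi (0 : ℝ)),
      ‖(angularKernel lam q x₁ y - angularKernel lam q x₂ y) * (f y - f x₁)‖ ≤
        C₁ * H * (3 * h) ^ α * (g₁ y + g₂ y) +
        C₂ * h * (G / x₁ * (angularKernel lam q x₁ y * y ^ α +
          x₁ ^ α * (angularKernel lam q x₁ y * y ^ (0 : ℝ))) + C₃ * H * g₃ y) := by
    filter_upwards [ae_restrict_Ioi_ne x₁, ae_restrict_Ioi_ne x₂] with y hy1 hy2
    obtain ⟨hy, hne1⟩ := hy1
    have hne2 := hy2.2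
    have hKn₁ := angularKernel_nonneg (lam := lam) (q := q) hx₁ hy
    have hKn₂ := angularKernel_nonneg (lam := lam) (q := q) hx₂ hy
    have hJn := angularKernel_nonneg (lam := lam) (q := q + 1 / 2) hx₁ hy
    rw [norm_mul, Real.norm_eq_abs, Real.norm_eq_abs]
    rcases lt_or_ge |y - x₁| (2 * h) with hc | hc
    · have hm₁ : y ∈ S₁ := show |y - x₁| < 3 * h by linarith
      have hm₂ : y ∈ S₂ := by
        have := abs_sub_le y x₁ x₂
        rw [← hh, abs_of_pos hh0] at this
        exact show |y - x₂| < 3 * h by linarith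
      have hg1 : g₁ y = |y - x₁| ^ γ := indicator_of_mem hm₁ _
      have hg2 : g₂ y = |y - x₂| ^ γ := indicator_of_mem hm₂ _
      have k1 := hK x₁ y hx₁ hy hne1
      have k2 := hK x₂ y hx₂ hy hne2
      have k3 : |angularKernel lam q x₁ y - angularKernel lam q x₂ y| ≤ C₁ * (g₁ y + g₂ y) := by
        rw [hg1, hg2, abs_le]
        constructor <;> linarith [rpow_nonneg (abs_nonneg (y - x₁)) γ,
          mul_nonneg hC₁.le (rpow_nonneg (abs_nonneg (y - x₁)) γ),
          mul_nonneg hC₁.le (rpow_nonneg (abs_nonneg (y - x₂)) γ)]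
      have k4 : |f y - f x₁| ≤ H * (3 * h) ^ α := by
        refine (hfH y x₁ hy hx₁).trans (mul_le_mul_of_nonneg_left ?_ hH)
        exact rpow_le_rpow (abs_nonneg _) (by linarith) hα.le
      have k5 : 0 ≤ C₂ * h * (G / x₁ * (angularKernel lam q x₁ y * y ^ α +
          x₁ ^ α * (angularKernel lam q x₁ y * y ^ (0 : ℝ))) + C₃ * H * g₃ y) := by
        have := n₃ y
        positivity
      have k6 := mul_le_mul k3 k4 (abs_nonneg _)
        (mul_nonneg hC₁.le (add_nonneg (n₁ y) (n₂ y)))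
      linarith
    · have hm₃ : y ∈ S₃ := show h < |y - x₁| by linarith
      have hg3 : g₃ y = |y - x₁| ^ (γ - 1) * |y - x₁| ^ α := by
        rw [← rpow_add (by linarith)]
        exact indicator_of_mem hm₃ _
      have k1 := hdiff x₁ x₂ y hx₂ h12 h2 hy hc
      have k2 : |f y - f x₁| ≤ G * (y ^ α + x₁ ^ α) := by
        have := abs_sub (f y) (f x₁)
        linarith [hfG y hy, hfG x₁ hx₁]
      have k3 := hfH y x₁ hy hx₁
      have k4 := hJ x₁ y hx₁ hy hne1
      have k5 : 0 ≤ C₁ * H * (3 * h) ^ α * (g₁ y + g₂ y) := by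
        have := n₁ y
        have := n₂ y
        positivity
      have k6 : angularKernel lam q x₁ y / x₁ * |f y - f x₁| ≤
          G / x₁ * (angularKernel lam q x₁ y * y ^ α +
          x₁ ^ α * (angularKernel lam q x₁ y * y ^ (0 : ℝ))) := by
        refine (mul_le_mul_of_nonneg_left k2 (by positivity)).trans_eq ?_
        rw [rpow_zero]
        ring
      have k7 : angularKernel lam (q + 1 / 2) x₁ y * |f y - f x₁| ≤ C₃ * H * g₃ y := by
        refine (mul_le_mul k4 k3 (abs_nonneg _) (by positivity)).trans_eq ?_
        rw [hg3]
        ring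
      calc _ ≤ C₂ * h * (angularKernel lam q x₁ y / x₁ + angularKernel lam (q + 1 / 2) x₁ y) *
            |f y - f x₁| := mul_le_mul_of_nonneg_right k1 (abs_nonneg _)
        _ = C₂ * h * (angularKernel lam q x₁ y / x₁ * |f y - f x₁| +
            angularKernel lam (q + 1 / 2) x₁ y * |f y - f x₁|) := by ring
        _ ≤ C₂ * h * (G / x₁ * (angularKernel lam q x₁ y * y ^ α +
            x₁ ^ α * (angularKernel lam q x₁ y * y ^ (0 : ℝ))) + C₃ * H * g₃ y) := by gcongr
        _ ≤ _ := by linarith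
  have hmain := norm_integral_le_of_norm_le (Integrable.fun_add inear ifar) hbound
  have hsum : ∫ y in Ioi (0 : ℝ), (C₁ * H * (3 * h) ^ α * (g₁ y + g₂ y) +
        C₂ * h * (G / x₁ * (angularKernel lam q x₁ y * y ^ α +
          x₁ ^ α * (angularKernel lam q x₁ y * y ^ (0 : ℝ))) + C₃ * H * g₃ y)) =
      C₁ * H * (3 * h) ^ α * ((∫ y in Ioi (0 : ℝ), g₁ y) + ∫ y in Ioi (0 : ℝ), g₂ y) +
        C₂ * h * (G / x₁ * (M * x₁ ^ (γ + α + 1) + x₁ ^ α * (M₀ * x₁ ^ (γ + 0 + 1))) +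
          C₃ * H * ∫ y in Ioi (0 : ℝ), g₃ y) := by
    rw [integral_add inear ifar, integral_const_mul,
      integral_add ig₁.integrableOn ig₂.integrableOn, integral_const_mul,
      integral_add ((Integrable.fun_add iα (i₀.const_mul _)).const_mul _)
        (ig₃.integrableOn.const_mul _),
      integral_const_mul, integral_const_mul, integral_add iα (i₀.const_mul _),
      integral_const_mul, eα, e₀]
  have r₁ : (3 * h) ^ α * (3 * h) ^ (γ + 1) = 3 ^ (γ + α + 1) * h ^ (γ + α + 1) := by
    rw [← rpow_add (by positivity), ← mul_rpow (by norm_num) hh0.le]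
    ring_nf
  have r₂ : h * (1 / x₁ * (M * x₁ ^ (γ + α + 1) + x₁ ^ α * (M₀ * x₁ ^ (γ + 0 + 1)))) ≤
      (M + M₀) * h ^ (γ + α + 1) := by
    have e : x₁ ^ (γ + α + 1) = x₁ ^ α * x₁ ^ (γ + 0 + 1) := by
      rw [← rpow_add hx₁]
      ring_nf
    have := mul_rpow_sub_one_le_rpow hh0 hhx (b := γ + α + 1) (by linarith)
    rw [rpow_sub_one hx₁.ne'] at this
    calc _ = (M + M₀) * (h * (x₁ ^ (γ + α + 1) / x₁)) := by rw [e]; ring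
      _ ≤ _ := mul_le_mul_of_nonneg_left this (by positivity)
  have r₃ : h * h ^ (γ + α) = h ^ (γ + α + 1) := by rw [rpow_add_one hh0.ne', mul_comm]
  rw [Real.norm_eq_abs, hsum] at hmain
  set P := h ^ (γ + α + 1) with hP
  have hP0 : 0 < P := by positivity
  calc _ ≤ C₁ * H * (3 * h) ^ α * (N * (3 * h) ^ (γ + 1) + N * (3 * h) ^ (γ + 1)) +
        C₂ * h * (G / x₁ * (M * x₁ ^ (γ + α + 1) + x₁ ^ α * (M₀ * x₁ ^ (γ + 0 + 1))) +
          C₃ * H * (R * h ^ (γ + α))) := hmain.trans (by gcongr)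
    _ = C₁ * H * (2 * N) * ((3 * h) ^ α * (3 * h) ^ (γ + 1)) + C₂ * G *
        (h * (1 / x₁ * (M * x₁ ^ (γ + α + 1) + x₁ ^ α * (M₀ * x₁ ^ (γ + 0 + 1))))) +
          C₂ * C₃ * H * R * (h * h ^ (γ + α)) := by ring
    _ ≤ C₁ * H * (2 * N) * (3 ^ (γ + α + 1) * P) + C₂ * G * ((M + M₀) * P) +
          C₂ * C₃ * H * R * P := by
        rw [r₁, r₃]
        gcongr
    _ ≤ C₁ * (H + G) * (2 * N) * (3 ^ (γ + α + 1) * P) + C₂ * (H + G) * ((M + M₀) * P) +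
          C₂ * C₃ * (H + G) * R * P := by gcongr <;> linarith
    _ = _ := by ring

theorem abs_integral_angularKernel_mul_sub_le (hlam : 0 < lam) (hq : lam < q)
    (hq' : q < lam + 1 / 2) (hα : 0 < α) (hαq : lam - 2 * q + α < -1)
    (hα1 : 2 * lam - 2 * q + α < 0) :
    ∃ C : ℝ, 0 < C ∧ ∀ (f : ℝ → ℝ) (H G : ℝ), 0 ≤ H → 0 ≤ G →
      AEStronglyMeasurable f (volume.restrict (Ioi 0)) →
      (∀ x y, 0 < x → 0 < y → |f x - f y| ≤ H * |x - y| ^ α) →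
      (∀ x, 0 < x → |f x| ≤ G * x ^ α) → ∀ x₁ x₂, 0 < x₂ → x₂ < x₁ →
      |(∫ y in Ioi (0 : ℝ), angularKernel lam q x₁ y * f y) -
          ∫ y in Ioi (0 : ℝ), angularKernel lam q x₂ y * f y| ≤
        C * (H + G) * (x₁ - x₂) ^ (2 * lam - 2 * q + α + 1) := by
  obtain ⟨C, hC, hdiff⟩ := abs_integral_angularKernel_sub_mul_le hlam hq hq' hα hαq hα1
  set M := ∫ r in Ioi (0 : ℝ), angularKernel lam q 1 r * r ^ α with hM
  set M₀ := ∫ r in Ioi (0 : ℝ), angularKernel lam q 1 r * r ^ (0 : ℝ) with hM₀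
  have hMn : 0 ≤ M := integral_angularKernel_mul_rpow_nonneg α one_pos
  have hM₀n : 0 ≤ M₀ := integral_angularKernel_mul_rpow_nonneg 0 one_pos
  set b := 2 * lam - 2 * q + α + 1 with hb
  have hb0 : 0 < b := by linarith
  refine ⟨C + M₀ + 2 * M * 2 ^ b, by positivity,
    fun f H G hH hG hfm hfH hfG x₁ x₂ hx₂ h12 => ?_⟩
  have hx₁ : 0 < x₁ := hx₂.trans h12
  have hh0 : 0 < x₁ - x₂ := sub_pos.2 h12
  set P := (x₁ - x₂) ^ b with hP
  have hP0 : 0 < P := by positivity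
  rcases lt_or_ge x₁ (2 * x₂) with hc | hc
  · have hd := hdiff f H G hH hG hfH hfG x₁ x₂ hx₂ h12 hc
    have i₁ := integrableOn_angularKernel_mul hlam hq hq' hα.le hαq hfm hfG hx₁
    have i₂ := integrableOn_angularKernel_mul hlam hq hq' hα.le hαq hfm hfG hx₂
    have j₁ := integrableOn_angularKernel_mul_rpow (a := 0) hlam hq hq' le_rfl (by linarith) hx₁
    have j₂ := integrableOn_angularKernel_mul_rpow (a := 0) hlam hq hq' le_rfl (by linarith) hx₂
    have i₁₂ : IntegrableOn (fun y => angularKernel lam q x₁ y * f y -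
        angularKernel lam q x₂ y * f y) (Ioi 0) := i₁.sub i₂
    have j₁₂ : IntegrableOn (fun y => angularKernel lam q x₁ y * y ^ (0 : ℝ) -
        angularKernel lam q x₂ y * y ^ (0 : ℝ)) (Ioi 0) := j₁.sub j₂
    have hsplit : ∫ y in Ioi (0 : ℝ),
          (angularKernel lam q x₁ y - angularKernel lam q x₂ y) * (f y - f x₁) =
        (∫ y in Ioi (0 : ℝ), angularKernel lam q x₁ y * f y) -
          (∫ y in Ioi (0 : ℝ), angularKernel lam q x₂ y * f y) -
          (M₀ * x₁ ^ (2 * lam - 2 * q + 0 + 1) - M₀ * x₂ ^ (2 * lam - 2 * q + 0 + 1)) * f x₁ := by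
      rw [← integral_angularKernel_mul_rpow hx₁, ← integral_angularKernel_mul_rpow hx₂,
        ← integral_sub i₁ i₂, ← integral_sub j₁ j₂, ← integral_mul_const,
        ← integral_sub i₁₂ (j₁₂.mul_const _)]
      congr 1
      ext y
      simp only [rpow_zero]
      ring
    rw [hsplit] at hd
    have hs : |x₁ ^ (2 * lam - 2 * q + 0 + 1) - x₂ ^ (2 * lam - 2 * q + 0 + 1)| * x₁ ^ α ≤ P := by
      have h1 := abs_rpow_sub_rpow_le (s := 2 * lam - 2 * q + 0 + 1) hx₂ h12 (by linarith)
        (by linarith)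
      have h2 := mul_rpow_sub_one_le_rpow hh0 (show x₁ - x₂ ≤ x₁ by linarith) (b := b)
        (by linarith)
      calc _ ≤ (x₁ - x₂) * x₁ ^ (2 * lam - 2 * q + 0 + 1 - 1) * x₁ ^ α := by gcongr
        _ = (x₁ - x₂) * x₁ ^ (b - 1) := by
            rw [mul_assoc, ← rpow_add hx₁]
            congr 2
            ring
        _ ≤ P := h2
    have ht : |(M₀ * x₁ ^ (2 * lam - 2 * q + 0 + 1) - M₀ * x₂ ^ (2 * lam - 2 * q + 0 + 1)) *
        f x₁| ≤ M₀ * G * P := by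
      rw [← mul_sub, abs_mul, abs_mul, abs_of_nonneg hM₀n]
      calc _ ≤ M₀ * |x₁ ^ (2 * lam - 2 * q + 0 + 1) - x₂ ^ (2 * lam - 2 * q + 0 + 1)| *
            (G * x₁ ^ α) := by
              have := hfG x₁ hx₁
              gcongr
        _ = M₀ * G * (|x₁ ^ (2 * lam - 2 * q + 0 + 1) - x₂ ^ (2 * lam - 2 * q + 0 + 1)| *
            x₁ ^ α) := by ring
        _ ≤ _ := by gcongr
    have h3 := (abs_sub_abs_le_abs_sub _ _).trans hd
    have p1 : 0 ≤ M₀ * H * P := by positivity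
    have p2 : 0 ≤ 2 * M * 2 ^ b * (H + G) * P := by positivity
    linarith
  · have g₁ := abs_integral_angularKernel_mul_le hlam hq hq' hα.le hαq hfG hx₁
    have g₂ := abs_integral_angularKernel_mul_le hlam hq hq' hα.le hαq hfG hx₂
    have h1 : x₂ ^ b ≤ x₁ ^ b := rpow_le_rpow hx₂.le h12.le hb0.le
    have h2 : x₁ ^ b ≤ 2 ^ b * P := by
      rw [hP, ← mul_rpow two_pos.le hh0.le]
      exact rpow_le_rpow hx₁.le (by linarith) hb0.le
    have h3 : M * G * x₁ ^ b ≤ M * G * (2 ^ b * P) := by gcongr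
    have h4 : M * G * x₂ ^ b ≤ M * G * (2 ^ b * P) :=
      mul_le_mul_of_nonneg_left (h1.trans h2) (by positivity)
    have h5 := abs_sub (∫ y in Ioi (0 : ℝ), angularKernel lam q x₁ y * f y)
      (∫ y in Ioi (0 : ℝ), angularKernel lam q x₂ y * f y)
    have p1 : 0 ≤ (C + M₀) * (H + G) * P := by positivity
    have p2 : 0 ≤ 2 * M * 2 ^ b * H * P := by positivity
    linarith

end Estimates

end BesselKernels

theorem holderRatioSet_nonneg {α : ℝ} {f : ℝ → ℝ} : ∀ r ∈ holderRatioSet α f, 0 ≤ r := by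
  rintro r ⟨x, y, -, -, -, rfl⟩
  positivity

theorem growthRatioSet_nonneg {α : ℝ} {f : ℝ → ℝ} : ∀ r ∈ growthRatioSet α f, 0 ≤ r := by
  rintro r ⟨x, hx, rfl⟩
  positivity

theorem MemHolderPlus.abs_sub_le {α : ℝ} {f : ℝ → ℝ} (hf : MemHolderPlus α f) (hα : 0 < α)
    {x y : ℝ} (hx : 0 < x) (hy : 0 < y) :
    |f x - f y| ≤ sSup (holderRatioSet α f) * |x - y| ^ α := by
  rcases eq_or_ne x y with rfl | hxy
  · simp [zero_rpow hα.ne']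
  · have h0 : 0 < |x - y| := abs_pos.2 (sub_ne_zero.2 hxy)
    rw [← div_le_iff₀ (by positivity)]
    exact le_csSup hf.2.1 ⟨x, y, hx, hy, hxy, rfl⟩

theorem MemHolderPlus.abs_le {α : ℝ} {f : ℝ → ℝ} (hf : MemHolderPlus α f) {x : ℝ} (hx : 0 < x) :
    |f x| ≤ sSup (growthRatioSet α f) * x ^ α := by
  rw [← div_le_iff₀ (by positivity)]
  exact le_csSup hf.2.2 ⟨x, hx, rfl⟩

/-- A function with Hölder and growth bounds lies in the Hölder space, with the expected norm. -/
theorem memHolderPlus_and_holderPlusNorm_le {β A B : ℝ} {u : ℝ → ℝ} (hβ : 0 < β)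
    (hH : ∀ x y, 0 < y → y < x → |u x - u y| ≤ A * (x - y) ^ β)
    (hG : ∀ x, 0 < x → |u x| ≤ B * x ^ β) :
    MemHolderPlus β u ∧ holderPlusNorm β u ≤ A + B := by
  have hH' : ∀ x y, 0 < x → 0 < y → |u x - u y| ≤ A * |x - y| ^ β := by
    intro x y hx hy
    rcases lt_trichotomy x y with h | rfl | h
    · rw [abs_sub_comm, abs_sub_comm x, abs_of_pos (sub_pos.2 h)]
      exact hH y x hx h
    · simp [zero_rpow hβ.ne']
    · rw [abs_of_pos (sub_pos.2 h)]
      exact hH x y hy h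
  have b1 : ∀ r ∈ holderRatioSet β u, r ≤ A := by
    rintro r ⟨x, y, hx, hy, hxy, rfl⟩
    have h0 : 0 < |x - y| := abs_pos.2 (sub_ne_zero.2 hxy)
    rw [div_le_iff₀ (by positivity)]
    exact hH' x y hx hy
  have b2 : ∀ r ∈ growthRatioSet β u, r ≤ B := by
    rintro r ⟨x, hx, rfl⟩
    rw [div_le_iff₀ (by positivity)]
    exact hG x hx
  refine ⟨⟨fun x hx => ?_, ⟨A, b1⟩, ⟨B, b2⟩⟩, add_le_add (csSup_le ?_ b1) (csSup_le ?_ b2)⟩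
  · have hx : 0 < x := hx
    rw [ContinuousWithinAt, tendsto_iff_dist_tendsto_zero]
    have ht : Tendsto (fun y => A * |y - x| ^ β) (nhdsWithin x (Ioi 0)) (nhds 0) := by
      have hc : Continuous fun y : ℝ => A * |y - x| ^ β :=
        continuous_const.mul (Continuous.rpow_const (by fun_prop) fun _ => Or.inr hβ.le)
      have := hc.tendsto x
      simp only [sub_self, abs_zero, zero_rpow hβ.ne', mul_zero] at this
      exact this.mono_left nhdsWithin_le_nhds
    refine squeeze_zero' (Eventually.of_forall fun _ => dist_nonneg) ?_ ht
    filter_upwards [self_mem_nhdsWithin] with y hy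
    exact hH' y x hy hx
  · exact ⟨_, 2, 1, two_pos, one_pos, by norm_num, rfl⟩
  · exact ⟨_, 1, one_pos, rfl⟩

/-- Schauder estimate for the negative power `Δ_λ^{-σ}` (Theorem A(a)). -/
theorem schauder_estimate_negative_power
    (lam σ α : ℝ) (hlam : 0 < lam) (hσ0 : 0 < σ) (hσ1 : σ < 1)
    (hα0 : 0 < α) (hα1 : α < 1) (hsum : α + 2 * σ < min lam 1) :
    ∃ C : ℝ, 0 < C ∧ ∀ f : ℝ → ℝ, MemHolderPlus α f →
      (∀ t : ℝ, 0 < t → ∀ x : ℝ, 0 < x →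
        IntegrableOn (fun y => besselPoissonKernel lam t x y * f y) (Set.Ioi 0)) ∧
      (∀ x : ℝ, 0 < x →
        IntegrableOn (fun t => poissonSemigroup lam f t x * t ^ (2 * σ - 1)) (Set.Ioi 0)) ∧
      MemHolderPlus (α + 2 * σ)
        (fun x => 1 / Real.Gamma (2 * σ) *
          ∫ t in Set.Ioi (0 : ℝ), poissonSemigroup lam f t x * t ^ (2 * σ - 1)) ∧
      holderPlusNorm (α + 2 * σ)
          (fun x => 1 / Real.Gamma (2 * σ) *
            ∫ t in Set.Ioi (0 : ℝ), poissonSemigroup lam f t x * t ^ (2 * σ - 1)) ≤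
        C * holderPlusNorm α f := by
  obtain ⟨hsl, hs1⟩ := lt_min_iff.1 hsum
  set q := lam + 1 / 2 - σ with hqdef
  have hq : lam < q := by linarith
  have hq' : q < lam + 1 / 2 := by linarith
  have hαq : lam - 2 * q + α < -1 := by linarith
  have hα1' : 2 * lam - 2 * q + α < 0 := by linarith
  have hexp : 2 * lam - 2 * q + α + 1 = α + 2 * σ := by rw [hqdef]; ring
  obtain ⟨c, hc, hred⟩ := exists_poisson_integral_eq_angularKernel hlam hσ0
    (show σ < lam + 1 / 2 by linarith)
  obtain ⟨C, hC, hhol⟩ := abs_integral_angularKernel_mul_sub_le hlam hq hq' hα0 hαq hα1'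
  set M := ∫ r in Ioi (0 : ℝ), angularKernel lam q 1 r * r ^ α with hM
  have hMn : 0 ≤ M := integral_angularKernel_mul_rpow_nonneg α one_pos
  have hΓ : 0 < Gamma (2 * σ) := Gamma_pos_of_pos (by positivity)
  set k := 1 / Gamma (2 * σ) * c with hk
  have hk0 : 0 < k := by positivity
  refine ⟨k * (C + M), by positivity, fun f hf => ?_⟩
  have hfm : AEStronglyMeasurable f (volume.restrict (Ioi 0)) :=
    hf.1.aestronglyMeasurable measurableSet_Ioi
  set H := sSup (holderRatioSet α f) with hH
  set G := sSup (growthRatioSet α f) with hG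
  have hH0 : 0 ≤ H := Real.sSup_nonneg holderRatioSet_nonneg
  have hG0 : 0 ≤ G := Real.sSup_nonneg growthRatioSet_nonneg
  have hfG : ∀ x, 0 < x → |f x| ≤ G * x ^ α := fun x hx => hf.abs_le hx
  have hfH : ∀ x y, 0 < x → 0 < y → |f x - f y| ≤ H * |x - y| ^ α :=
    fun x y hx hy => hf.abs_sub_le hα0 hx hy
  have hint := fun x (hx : 0 < x) => hred x f hx hfm
    (integrableOn_angularKernel_mul hlam hq hq' hα0.le hαq hfm hfG hx)
  have hu : ∀ x, 0 < x → 1 / Gamma (2 * σ) *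
      ∫ t in Ioi (0 : ℝ), poissonSemigroup lam f t x * t ^ (2 * σ - 1) =
        k * ∫ y in Ioi (0 : ℝ), angularKernel lam q x y * f y := fun x hx => by
    rw [(hint x hx).2.2, hk, mul_assoc]
  have hmem := memHolderPlus_and_holderPlusNorm_le (β := α + 2 * σ) (A := k * (C * (H + G)))
    (B := k * (M * G)) (u := fun x => 1 / Gamma (2 * σ) *
      ∫ t in Ioi (0 : ℝ), poissonSemigroup lam f t x * t ^ (2 * σ - 1))
    (by positivity)
    (fun x y hy hxy => by
      have := hhol f H G hH0 hG0 hfm hfH hfG x y hy hxy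
      rw [hexp] at this
      simp only [hu x (hy.trans hxy), hu y hy]
      rw [← mul_sub, abs_mul, abs_of_pos hk0]
      exact (mul_le_mul_of_nonneg_left this hk0.le).trans_eq (by ring))
    (fun x hx => by
      have := abs_integral_angularKernel_mul_le hlam hq hq' hα0.le hαq hfG hx
      rw [hexp] at this
      simp only [hu x hx]
      rw [abs_mul, abs_of_pos hk0]
      exact (mul_le_mul_of_nonneg_left this hk0.le).trans_eq (by ring))
  refine ⟨fun t ht x hx => (hint x hx).1 t ht, fun x hx => (hint x hx).2.1, hmem.1,
    hmem.2.trans ?_⟩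
  rw [holderPlusNorm]
  have : 0 ≤ k * M * H := by positivity
  linarith
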